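/- Suppose the integral cubic form C has the shape C(x,y) = y₁F₁(x) + a·y₂·x₁² + b·y₂·x₁x₂ + c·y₂·x₂² + Σ_{i=1}^{m} x_i q_i(y) + R(y), where a,b,c are integers with b² − 4ac ≠ 0 and F₁ is a nonsingular indefinite integral quadratic form of rank r ≥ 5. Assume C is irreducible over ℚ and for every prime p the equation C = 0 has a nonsingular p-adic zero. Then there exist c₀ > 0, K > 0 and Y₀ such that for every Y ≥ Y₀ there is a finite set 𝒞_h(Y) ⊆ ℤ^h with ‖y‖_∞ ≤ K·Y for all y ∈ 𝒞_h(Y) and Σ_{y ∈ 𝒞_h(Y)} 𝔖(F_y) ≥ c₀·Y^h/ log Y. -/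

import Mathlib

open Matrix MvPolynomial

/-- The complete exponential sum `S_q(F) = Σ*_{a mod q} Σ_{b mod q} e(a·F(b)/q)` attached to
an integer-valued function `F` on `ℤ^m`. -/
noncomputable def expSum (m : ℕ) (F : (Fin m → ℤ) → ℤ) (q : ℕ) : ℂ :=
  ∑ a ∈ (Finset.range q).filter fun a => Nat.gcd a q = 1,
    ∑ b : Fin m → Fin q,
      Complex.exp (2 * (Real.pi : ℂ) * Complex.I * (a : ℂ) *
        ((F fun j => ((b j : ℕ) : ℤ)) : ℂ) / (q : ℂ))

/-- The singular series `𝔖(F) = Σ_{q ≥ 1} q^{-m} S_q(F)`. -/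
noncomputable def singSeries (m : ℕ) (F : (Fin m → ℤ) → ℤ) : ℂ :=
  ∑' q : ℕ, (q : ℂ) ^ (-(m : ℤ)) * expSum m F q

/-!
Fix a suitable modulus `N` and take `y = N (v l, t, …)` with a prime `l ≡ 1` modulo `N` of size `Y`,
`t ≡ w` modulo `N`, and the other coordinates free. Then `F_y` is `N` times a quadratic polynomial
whose quadratic part is the member `v l F₁ + t (a x₁² + b x₁ x₂ + c x₂²)` of a fixed pencil, and its
singular series is a limit of products of local densities.

* For some vector `x`, choosing `v` and `w` as the values at `x` of the binary form and of `-F₁`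
  makes `x` a zero of that quadratic part modulo `N`. With enough powers of the partial derivative
  there in `N`, it lifts to zeros modulo every power of `N`, so the density at `N` is bounded below.
* Five variables on which the quadratic part is nondegenerate modulo `p` give normalized Gauss
  sums of size at most `p ^ (-5 / 2)`, hence a density `≥ 1 - 2 p ^ (-3 / 2)` at every prime not
  dividing the determinant of a certain `5 × 5` member of a pencil.
* At a prime `p` dividing that determinant the density is still `≥ 1 - 1 / p`, because the reduced
  quadratic part has an isotropic vector outside its radical: for `p ≠ l` the binary form lowers the
  rank of `F₁` by at most `2`, and for `p = l` only the binary form survives, which is split because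
  `l ≡ 1` modulo `4 |b² - 4ac|` makes `b² - 4ac` a square modulo `l`.
* As a polynomial in `t` the determinant has at most five roots modulo `p`, so the sum of `1 / p`
  over its prime factors is small on average over `t`.

There are `≫ Y / log Y` choices for `l`, which is where the logarithm comes from.
-/

section PrimesInProgressions

open Finset Filter Topology ArithmeticFunction

theorem norm_sum_Ico_smul_le_of_antitoneOn {E : Type*} [NormedAddCommGroup E] [NormedSpace ℝ E]
    {z : ℕ → E} {f : ℕ → ℝ} {B : ℝ} {a b : ℕ} (hab : a ≤ b)
    (hz : ∀ n, ‖∑ k ∈ Ico a n, z k‖ ≤ B) (hf : AntitoneOn f (Set.Ici a))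
    (hf0 : ∀ k, a ≤ k → 0 ≤ f k) :
    ‖∑ k ∈ Ico a b, f k • z k‖ ≤ B * f a := by
  have abel : ∀ n, a ≤ n →
      ‖∑ k ∈ Ico a n, f k • z k - f n • ∑ k ∈ Ico a n, z k‖ ≤ B * (f a - f n) := by
    intro n han
    induction n, han using Nat.le_induction with
    | base => simp
    | succ n han ih =>
      have hstep : ∑ k ∈ Ico a (n + 1), f k • z k - f (n + 1) • ∑ k ∈ Ico a (n + 1), z k
          = (∑ k ∈ Ico a n, f k • z k - f n • ∑ k ∈ Ico a n, z k)
            + (f n - f (n + 1)) • ∑ k ∈ Ico a (n + 1), z k := by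
        rw [sum_Ico_succ_top han, sum_Ico_succ_top han]
        module
      have hdrop : 0 ≤ f n - f (n + 1) :=
        sub_nonneg.mpr (hf han (Set.mem_Ici.mpr (by omega)) (Nat.le_succ n))
      calc _ ≤ B * (f a - f n) + (f n - f (n + 1)) * B := by
            rw [hstep]
            refine norm_add_le_of_le ih ?_
            rw [norm_smul, Real.norm_of_nonneg hdrop]
            exact mul_le_mul_of_nonneg_left (hz _) hdrop
        _ = B * (f a - f (n + 1)) := by ring
  calc ‖∑ k ∈ Ico a b, f k • z k‖
      = ‖(∑ k ∈ Ico a b, f k • z k - f b • ∑ k ∈ Ico a b, z k) + f b • ∑ k ∈ Ico a b, z k‖ := by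
        rw [sub_add_cancel]
    _ ≤ B * (f a - f b) + f b * B := by
        refine norm_add_le_of_le (abel b hab) ?_
        rw [norm_smul, Real.norm_of_nonneg (hf0 b hab)]
        exact mul_le_mul_of_nonneg_left (hz b) (hf0 b hab)
    _ = B * f a := by ring

variable {N : ℕ} [NeZero N]

theorem sum_range_character_eq_zero {χ : DirichletCharacter ℂ N} (hχ : χ ≠ 1) :
    ∑ k ∈ range N, χ (k : ZMod N) = 0 := by
  rw [← MulChar.sum_eq_zero_of_ne_one hχ]
  refine sum_bij' (fun k _ => (k : ZMod N)) (fun z _ => z.val) (by simp)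
    (fun z _ => mem_range.mpr z.val_lt) (fun k hk => ZMod.val_cast_of_lt (mem_range.mp hk))
    (by simp) (by simp)

theorem norm_sum_range_character_le {χ : DirichletCharacter ℂ N} (hχ : χ ≠ 1) (n : ℕ) :
    ‖∑ k ∈ range n, χ (k : ZMod N)‖ ≤ N := by
  induction n using Nat.strong_induction_on with
  | _ n ih =>
    rcases le_or_gt n N with hn | hn
    · calc _ ≤ ∑ k ∈ range n, ‖χ (k : ZMod N)‖ := norm_sum_le _ _
        _ ≤ ∑ _k ∈ range n, (1 : ℝ) := sum_le_sum fun k _ => χ.norm_le_one _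
        _ ≤ N := by simpa using hn
    · obtain ⟨j, rfl⟩ := Nat.exists_eq_add_of_le hn.le
      rw [sum_range_add, sum_range_character_eq_zero hχ, zero_add]
      simpa using ih j (by have := NeZero.pos N; omega)

theorem norm_sum_Ico_character_le {χ : DirichletCharacter ℂ N} (hχ : χ ≠ 1) (a b : ℕ) :
    ‖∑ k ∈ Ico a b, χ (k : ZMod N)‖ ≤ 2 * N := by
  rcases le_total a b with hab | hab
  · rw [sum_Ico_eq_sub _ hab, two_mul]
    exact norm_sub_le_of_le (norm_sum_range_character_le hχ b) (norm_sum_range_character_le hχ a)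
  · simp [Ico_eq_empty_of_le hab]

theorem hasSum_rpow_smul_character (χ : DirichletCharacter ℂ N) {s : ℝ} (hs : 1 < s) :
    HasSum (fun k : ℕ => (k : ℝ) ^ (-s) • χ (k : ZMod N)) (χ.LFunction s) := by
  have hs' : 1 < (s : ℂ).re := by simpa using hs
  rw [DirichletCharacter.LFunction_eq_LSeries χ hs']
  have hsum := (DirichletCharacter.LSeriesSummable_of_one_lt_re χ hs').hasSum
  refine hsum.congr_fun fun k => ?_
  rcases Nat.eq_zero_or_pos k with rfl | hk
  · simp [Real.zero_rpow (show -s ≠ 0 by linarith)]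
  · rw [LSeries.term_of_ne_zero hk.ne', Complex.real_smul, Complex.ofReal_cpow (by positivity),
      div_eq_mul_inv, mul_comm, ← Complex.cpow_neg]
    simp

theorem norm_LFunction_sub_sum_range_le {χ : DirichletCharacter ℂ N} (hχ : χ ≠ 1) {s : ℝ}
    (hs : 1 < s) {u : ℕ} (hu : 1 ≤ u) :
    ‖χ.LFunction s - ∑ k ∈ range u, (k : ℝ) ^ (-s) • χ (k : ZMod N)‖
      ≤ 2 * N * (u : ℝ) ^ (-s) := by
  refine le_of_tendsto
    (((hasSum_rpow_smul_character χ hs).tendsto_sum_nat.sub_const _).norm) ?_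
  filter_upwards [eventually_ge_atTop u] with b hub
  rw [← sum_Ico_eq_sub _ hub]
  refine norm_sum_Ico_smul_le_of_antitoneOn (f := fun k => (k : ℝ) ^ (-s)) hub
    (norm_sum_Ico_character_le hχ u) ?_ (fun k _ => by positivity)
  intro i hi j _ hij
  have hi0 : 0 < i := hu.trans (Set.mem_Ici.mp hi)
  exact Real.rpow_le_rpow_of_nonpos (by exact_mod_cast hi0) (by exact_mod_cast hij) (by linarith)

theorem norm_LFunction_one_sub_sum_range_le {χ : DirichletCharacter ℂ N} (hχ : χ ≠ 1) {u : ℕ}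
    (hu : 1 ≤ u) :
    ‖χ.LFunction 1 - ∑ k ∈ range u, (k : ℝ)⁻¹ • χ (k : ZMod N)‖ ≤ 2 * N * (u : ℝ)⁻¹ := by
  have hrpow (k : ℕ) : Tendsto (fun s : ℝ => (k : ℝ) ^ (-s)) (𝓝[>] 1) (𝓝 (k : ℝ)⁻¹) := by
    have h := (Real.continuousAt_const_rpow' (a := k) (b := -1) (by norm_num)).tendsto.comp
      (continuous_neg.tendsto' (1 : ℝ) (-1) rfl)
    rw [Real.rpow_neg_one] at h
    exact h.mono_left nhdsWithin_le_nhds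
  have hL : Tendsto (fun s : ℝ => χ.LFunction s) (𝓝[>] 1) (𝓝 (χ.LFunction 1)) := by
    have h := (DirichletCharacter.differentiable_LFunction hχ).continuous.comp
      Complex.continuous_ofReal
    exact (h.tendsto' 1 _ (by simp)).mono_left nhdsWithin_le_nhds
  refine le_of_tendsto_of_tendsto
    ((hL.sub (tendsto_finsetSum _ fun k _ => (hrpow k).smul_const _)).norm)
    ((hrpow u).const_mul _) ?_
  filter_upwards [self_mem_nhdsWithin] with s hs
  exact norm_LFunction_sub_sum_range_le hχ hs hu

theorem sum_Ioc_vonMangoldt_le (x : ℕ) :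
    ∑ d ∈ Ioc 0 x, vonMangoldt d ≤ (Real.log 4 + 4) * x := by
  simpa [Chebyshev.psi] using Chebyshev.psi_le_const_mul_self (x := (x : ℝ)) (by positivity)

theorem sum_Ioc_vonMangoldt_mul_div_eq_log_factorial (x : ℕ) :
    ∑ d ∈ Ioc 0 x, vonMangoldt d * ((x / d : ℕ) : ℝ) = Real.log x.factorial := by
  have hzeta := sum_Ioc_mul_zeta_eq_sum vonMangoldt x
  rw [vonMangoldt_mul_zeta] at hzeta
  rw [← hzeta]
  clear hzeta
  induction x with
  | zero => simp
  | succ n ih =>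
    rw [Nat.factorial_succ, ← insert_Ioc_right_eq_Ioc_add_one (by omega), sum_insert (by simp), ih]
    push_cast
    rw [Real.log_mul (by positivity) (by positivity)]
    simp

theorem mul_log_sub_le_log_factorial {x : ℕ} (hx : 1 ≤ x) :
    x * Real.log x - x ≤ Real.log x.factorial := by
  have hx0 : (0 : ℝ) < x := by exact_mod_cast hx
  have h := Real.log_le_log (by positivity) (Real.pow_div_factorial_le_exp (x : ℝ) hx0.le x)
  rw [Real.log_exp, Real.log_div (by positivity) (by positivity), Real.log_pow] at h
  linarith

theorem abs_sum_vonMangoldt_div_sub_log_le {x : ℕ} (hx : 1 ≤ x) :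
    |∑ n ∈ Ioc 0 x, vonMangoldt n / n - Real.log x| ≤ Real.log 4 + 5 := by
  have hx0 : (0 : ℝ) < x := by exact_mod_cast hx
  have : 0 ≤ Real.log 4 := Real.log_nonneg (by norm_num)
  have hupper : Real.log x.factorial ≤ x * ∑ n ∈ Ioc 0 x, vonMangoldt n / n := by
    rw [← sum_Ioc_vonMangoldt_mul_div_eq_log_factorial, mul_sum]
    refine sum_le_sum fun d _ => ?_
    calc _ ≤ vonMangoldt d * ((x : ℝ) / d) :=
          mul_le_mul_of_nonneg_left Nat.cast_div_le vonMangoldt_nonneg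
      _ = _ := by ring
  have hlower : x * ∑ n ∈ Ioc 0 x, vonMangoldt n / n - (Real.log 4 + 4) * x
      ≤ Real.log x.factorial := by
    rw [← sum_Ioc_vonMangoldt_mul_div_eq_log_factorial, mul_sum]
    refine (sub_le_sub_left (sum_Ioc_vonMangoldt_le x) _).trans ?_
    rw [← sum_sub_distrib]
    refine sum_le_sum fun d _ => ?_
    have hfloor : (x : ℝ) / d - 1 ≤ ((x / d : ℕ) : ℝ) := by
      rw [← Nat.floor_div_eq_div (K := ℝ)]
      exact (Nat.sub_one_lt_floor ((x : ℝ) / d)).le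
    calc _ = vonMangoldt d * ((x : ℝ) / d - 1) := by ring
      _ ≤ _ := mul_le_mul_of_nonneg_left hfloor vonMangoldt_nonneg
  have hfact : Real.log x.factorial ≤ x * Real.log x := by
    rw [← Real.log_pow]
    exact Real.log_le_log (by positivity) (by exact_mod_cast Nat.factorial_le_pow x)
  have hstirling := mul_log_sub_le_log_factorial hx
  rw [abs_le]
  constructor <;> refine le_of_mul_le_mul_left ?_ hx0 <;> nlinarith

theorem antitoneOn_nat_log_div : AntitoneOn (fun k : ℕ => Real.log k / k) (Set.Ici 3) := by
  have hexp : ∀ k ∈ Set.Ici 3, Real.exp 1 ≤ ((k : ℕ) : ℝ) := fun k hk => by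
    have : (3 : ℝ) ≤ k := by exact_mod_cast hk
    linarith [Real.exp_one_lt_d9]
  exact fun i hi j hj hij =>
    Real.log_div_self_antitoneOn (hexp i hi) (hexp j hj) (by exact_mod_cast hij)

theorem exists_norm_sum_character_mul_log_div_le {χ : DirichletCharacter ℂ N} (hχ : χ ≠ 1) :
    ∃ B : ℝ, ∀ x : ℕ,
      ‖∑ n ∈ Ioc (0 : ℕ) x, χ (n : ZMod N) * (Real.log n : ℝ) / n‖ ≤ B := by
  refine ⟨∑ n ∈ Ico (1 : ℕ) 3, ‖χ (n : ZMod N) * (Real.log n : ℝ) / n‖ + 2 * N * (Real.log 3 / 3),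
    fun x => ?_⟩
  have hlog3 : 0 ≤ 2 * N * (Real.log 3 / 3) := by
    have := Real.log_nonneg (show (1 : ℝ) ≤ 3 by norm_num)
    positivity
  rw [show Ioc 0 x = Ico 1 (x + 1) from (Ico_add_one_add_one_eq_Ioc 0 x).symm]
  rcases le_or_gt (x + 1) 3 with hx | hx
  · refine (norm_sum_le _ _).trans ((sum_le_sum_of_subset_of_nonneg
      (Ico_subset_Ico_right hx) fun _ _ _ => norm_nonneg _).trans ?_)
    linarith
  · rw [← sum_Ico_consecutive _ (by omega : 1 ≤ 3) hx.le]
    refine norm_add_le_of_le (norm_sum_le _ _) ?_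
    have htail := norm_sum_Ico_smul_le_of_antitoneOn hx.le (norm_sum_Ico_character_le hχ 3)
      antitoneOn_nat_log_div fun k _ => div_nonneg (Real.log_natCast_nonneg k) k.cast_nonneg
    calc _ = ‖∑ k ∈ Ico 3 (x + 1), (Real.log k / k) • χ (k : ZMod N)‖ := by
          congr 1
          refine sum_congr rfl fun k _ => ?_
          rw [Complex.real_smul]
          push_cast
          ring
      _ ≤ _ := by simpa using htail

theorem norm_LFunction_one_sub_sum_Ioc_div_le {χ : DirichletCharacter ℂ N} (hχ : χ ≠ 1) {x : ℕ}
    (hx : 1 ≤ x) {d : ℕ} (hd : 1 ≤ d) :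
    ‖χ.LFunction 1 - ∑ k ∈ Ioc 0 (x / d), χ (k : ZMod N) / k‖ ≤ 2 * N * (d / x) := by
  have : (0 : ℝ) < d := by exact_mod_cast hd
  have : (0 : ℝ) < x := by exact_mod_cast hx
  have hsum : ∑ k ∈ Ioc 0 (x / d), χ (k : ZMod N) / k =
      ∑ k ∈ range (x / d + 1), (k : ℝ)⁻¹ • χ (k : ZMod N) := by
    rw [show Ioc 0 (x / d) = (range (x / d + 1)).erase 0 by ext i; simp; omega,
      sum_erase _ (by simp)]
    refine sum_congr rfl fun k _ => ?_
    rw [Complex.real_smul]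
    push_cast
    ring
  have hinv : ((x / d + 1 : ℕ) : ℝ)⁻¹ ≤ d / x := by
    rw [inv_le_comm₀ (by positivity) (by positivity), inv_div]
    have := Nat.lt_floor_add_one ((x : ℝ) / d)
    rw [Nat.floor_div_eq_div] at this
    push_cast
    linarith
  rw [hsum]
  exact (norm_LFunction_one_sub_sum_range_le hχ (Nat.le_add_left _ _)).trans (by gcongr)

omit [NeZero N] in
theorem sum_character_mul_log_div_eq (χ : DirichletCharacter ℂ N) (x : ℕ) :
    ∑ n ∈ Ioc 0 x, χ (n : ZMod N) * (Real.log n : ℝ) / n =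
      ∑ d ∈ Ioc 0 x, χ (d : ZMod N) * (vonMangoldt d : ℝ) / d *
        ∑ k ∈ Ioc 0 (x / d), χ (k : ZMod N) / k := by
  let f : ArithmeticFunction ℂ := ⟨fun n => χ (n : ZMod N) * (vonMangoldt n : ℝ) / n, by simp⟩
  let g : ArithmeticFunction ℂ := ⟨fun n => χ (n : ZMod N) / n, by simp⟩
  refine Eq.trans (sum_congr rfl fun n _ => ?_) (sum_Ioc_mul_eq_sum_sum f g x)
  have hterm : ∀ p ∈ n.divisorsAntidiagonal,
      f p.1 * g p.2 = χ (n : ZMod N) / n * ((vonMangoldt p.1 : ℝ) : ℂ) := by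
    rintro ⟨p, q⟩ hp
    simp only [f, g, coe_mk]
    rw [← (Nat.mem_divisorsAntidiagonal.mp hp).1]
    push_cast
    rw [map_mul]
    ring
  rw [ArithmeticFunction.mul_apply, sum_congr rfl hterm, ← mul_sum,
    Nat.sum_divisorsAntidiagonal (fun i _ => ((vonMangoldt i : ℝ) : ℂ)), ← Complex.ofReal_sum,
    vonMangoldt_sum]
  ring

theorem norm_sum_character_mul_vonMangoldt_mul_error_le {χ : DirichletCharacter ℂ N}
    (hχ : χ ≠ 1) {x : ℕ} (hx : 1 ≤ x) :
    ‖∑ d ∈ Ioc 0 x, χ (d : ZMod N) * (vonMangoldt d : ℝ) / d *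
      (χ.LFunction 1 - ∑ k ∈ Ioc 0 (x / d), χ (k : ZMod N) / k)‖ ≤
      2 * N * (Real.log 4 + 4) := by
  have : (0 : ℝ) < x := by exact_mod_cast hx
  calc _ ≤ ∑ d ∈ Ioc 0 x, (2 * N / x) * vonMangoldt d := by
        refine norm_sum_le_of_le _ fun d hd => ?_
        have hd0 : 0 < d := (mem_Ioc.mp hd).1
        have hΛ : ‖χ (d : ZMod N) * (vonMangoldt d : ℝ) / d‖ ≤ vonMangoldt d / d := by
          rw [norm_div, norm_mul, Complex.norm_real, Complex.norm_natCast,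
            Real.norm_of_nonneg vonMangoldt_nonneg]
          gcongr
          exact mul_le_of_le_one_left vonMangoldt_nonneg (χ.norm_le_one _)
        calc _ ≤ vonMangoldt d / d * (2 * N * (d / x)) := by
              rw [norm_mul]
              exact mul_le_mul hΛ (norm_LFunction_one_sub_sum_Ioc_div_le hχ hx hd0)
                (norm_nonneg _) (div_nonneg vonMangoldt_nonneg (by positivity))
          _ = _ := by field_simp
    _ = (2 * N / x) * ∑ d ∈ Ioc 0 x, vonMangoldt d := by rw [mul_sum]
    _ ≤ (2 * N / x) * ((Real.log 4 + 4) * x) := by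
        gcongr
        exact sum_Ioc_vonMangoldt_le x
    _ = _ := by field_simp

theorem exists_norm_sum_character_mul_vonMangoldt_div_le {χ : DirichletCharacter ℂ N}
    (hχ : χ ≠ 1) :
    ∃ B : ℝ, ∀ x : ℕ, 1 ≤ x →
      ‖∑ n ∈ Ioc 0 x, χ (n : ZMod N) * (vonMangoldt n : ℝ) / n‖ ≤ B := by
  obtain ⟨B, hB⟩ := exists_norm_sum_character_mul_log_div_le hχ
  have hL0 : χ.LFunction 1 ≠ 0 := DirichletCharacter.LFunction_apply_one_ne_zero hχ
  refine ⟨(B + 2 * N * (Real.log 4 + 4)) / ‖χ.LFunction 1‖, fun x hx => ?_⟩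
  have hsplit : χ.LFunction 1 * ∑ n ∈ Ioc 0 x, χ (n : ZMod N) * (vonMangoldt n : ℝ) / n =
      ∑ n ∈ Ioc 0 x, χ (n : ZMod N) * (Real.log n : ℝ) / n +
      ∑ d ∈ Ioc 0 x, χ (d : ZMod N) * (vonMangoldt d : ℝ) / d *
        (χ.LFunction 1 - ∑ k ∈ Ioc 0 (x / d), χ (k : ZMod N) / k) := by
    rw [sum_character_mul_log_div_eq, ← sum_add_distrib, mul_sum]
    exact sum_congr rfl fun d _ => by ring
  rw [le_div_iff₀ (norm_pos_iff.mpr hL0), mul_comm, ← norm_mul, hsplit]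
  exact norm_add_le_of_le (hB x) (norm_sum_character_mul_vonMangoldt_mul_error_le hχ hx)

theorem exists_sum_nonprime_vonMangoldt_div_le :
    ∃ B : ℝ, ∀ s : Finset ℕ, ∑ n ∈ s with ¬ n.Prime, vonMangoldt n / n ≤ B := by
  have hsummable := vonMangoldt.summable_residueClass_non_primes_div (q := 1) 0
  refine ⟨_, fun s => le_trans (le_of_eq ?_) (hsummable.sum_le_tsum s fun n _ => ?_)⟩
  · rw [sum_filter]
    refine sum_congr rfl fun n _ => ?_
    have hres : vonMangoldt.residueClass (q := 1) 0 n = vonMangoldt n := by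
      simp [vonMangoldt.residueClass, Subsingleton.elim (n : ZMod 1) 0]
    by_cases hn : n.Prime <;> simp [hn, hres]
  · have := vonMangoldt.residueClass_nonneg (q := 1) 0 n
    split_ifs <;> positivity

omit [NeZero N] in
theorem re_sum_trivial_character_mul_vonMangoldt_div (s : Finset ℕ) :
    (∑ n ∈ s, (1 : DirichletCharacter ℂ N) (n : ZMod N) * (vonMangoldt n : ℝ) / n).re =
      ∑ n ∈ s with n.Coprime N, vonMangoldt n / n := by
  rw [Complex.re_sum, sum_filter]
  refine sum_congr rfl fun n _ => ?_
  split_ifs with hn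
  · rw [MulChar.one_apply ((ZMod.isUnit_iff_coprime n N).mpr hn), one_mul]
    exact_mod_cast rfl
  · rw [MulChar.map_nonunit _ (mt (ZMod.isUnit_iff_coprime n N).mp hn)]
    simp

theorem exists_sum_not_coprime_vonMangoldt_div_le (N : ℕ) [NeZero N] :
    ∃ B : ℝ, ∀ s : Finset ℕ, ∑ n ∈ s with ¬ n.Coprime N, vonMangoldt n / n ≤ B := by
  obtain ⟨B, hB⟩ := exists_sum_nonprime_vonMangoldt_div_le
  refine ⟨∑ n ∈ Ioc 0 N, vonMangoldt n / n + B, fun s => ?_⟩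
  have hnonneg : ∀ n : ℕ, 0 ≤ vonMangoldt n / n := fun n =>
    div_nonneg vonMangoldt_nonneg n.cast_nonneg
  have hsub : {n ∈ s | ¬ n.Coprime N} ⊆ Ioc 0 N ∪ {n ∈ s | ¬ n.Prime} := by
    intro n hn
    obtain ⟨hns, hnN⟩ := mem_filter.mp hn
    rcases em n.Prime with hp | hp
    · exact mem_union_left _ (mem_Ioc.mpr ⟨hp.pos,
        Nat.le_of_dvd (NeZero.pos N) ((Nat.Prime.dvd_iff_not_coprime hp).mpr hnN)⟩)
    · exact mem_union_right _ (mem_filter.mpr ⟨hns, hp⟩)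
  refine (sum_le_sum_of_subset_of_nonneg hsub fun n _ _ => hnonneg n).trans ?_
  have hunion := sum_union_inter (s₁ := Ioc 0 N) (s₂ := {n ∈ s | ¬ n.Prime})
    (f := fun n => vonMangoldt n / n)
  linarith [hB s, sum_nonneg fun n (_ : n ∈ Ioc 0 N ∩ {n ∈ s | ¬ n.Prime}) => hnonneg n]

theorem totient_mul_sum_residueClass_div {a : ZMod N} (ha : IsUnit a) (s : Finset ℕ) :
    ((N.totient * ∑ n ∈ s, vonMangoldt.residueClass a n / n : ℝ) : ℂ) =
      ∑ χ : DirichletCharacter ℂ N,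
        χ a⁻¹ * ∑ n ∈ s, χ (n : ZMod N) * (vonMangoldt n : ℝ) / n := by
  have hφ : (N.totient : ℂ) ≠ 0 := by exact_mod_cast (Nat.totient_pos.mpr (NeZero.pos N)).ne'
  simp only [mul_sum]
  rw [sum_comm]
  push_cast
  refine sum_congr rfl fun n _ => ?_
  rw [vonMangoldt.residueClass_apply ha n, mul_div_assoc', mul_inv_cancel_left₀ hφ, sum_div]
  exact sum_congr rfl fun χ _ => by ring

theorem exists_abs_totient_mul_sum_residueClass_div_sub_log_le {a : ZMod N} (ha : IsUnit a) :
    ∃ B : ℝ, ∀ x : ℕ, 1 ≤ x →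
      |N.totient * ∑ n ∈ Ioc 0 x, vonMangoldt.residueClass a n / n - Real.log x| ≤ B := by
  classical
  choose! B hB using fun χ hχ =>
    exists_norm_sum_character_mul_vonMangoldt_div_le (N := N) (χ := χ) hχ
  obtain ⟨B', hB'⟩ := exists_sum_not_coprime_vonMangoldt_div_le N
  refine ⟨Real.log 4 + 5 + B' + ∑ χ ∈ univ.erase (1 : DirichletCharacter ℂ N), B χ,
    fun x hx => ?_⟩
  have hsplit := congrArg Complex.re (totient_mul_sum_residueClass_div ha (Ioc 0 x))
  rw [Complex.ofReal_re, ← add_sum_erase _ _ (mem_univ (1 : DirichletCharacter ℂ N)),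
    Complex.add_re, MulChar.one_apply (isUnit_of_dvd_one ⟨a, (ZMod.inv_mul_of_unit a ha).symm⟩),
    one_mul, re_sum_trivial_character_mul_vonMangoldt_div] at hsplit
  have hother : |(∑ χ ∈ univ.erase (1 : DirichletCharacter ℂ N),
      χ a⁻¹ * ∑ n ∈ Ioc 0 x, χ (n : ZMod N) * (vonMangoldt n : ℝ) / n).re| ≤
      ∑ χ ∈ univ.erase (1 : DirichletCharacter ℂ N), B χ := by
    refine (Complex.abs_re_le_norm _).trans (norm_sum_le_of_le _ fun χ hχ => ?_)
    rw [norm_mul]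
    exact (mul_le_of_le_one_left (norm_nonneg _) (χ.norm_le_one _)).trans
      (hB χ (ne_of_mem_erase hχ) x hx)
  have hcoprime := sum_filter_add_sum_filter_not (Ioc 0 x) (fun n => n.Coprime N)
    fun n => vonMangoldt n / n
  have hnonneg : 0 ≤ ∑ n ∈ Ioc 0 x with ¬ n.Coprime N, vonMangoldt n / n :=
    sum_nonneg fun n _ => div_nonneg vonMangoldt_nonneg n.cast_nonneg
  have hmertens := abs_le.mp (abs_sum_vonMangoldt_div_sub_log_le hx)
  have hothers := abs_le.mp hother
  have hnotcoprime := hB' (Ioc 0 x)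
  rw [abs_le]
  constructor <;> linarith

omit [NeZero N] in
theorem sum_Ioc_residueClass_div_le (a : ZMod N) {u v : ℕ} (hu : 1 ≤ u) :
    ∑ n ∈ Ioc u v, vonMangoldt.residueClass a n / n ≤
      #{l ∈ Ioc u v | Nat.Prime l ∧ (l : ZMod N) = a} * (Real.log v / u) +
        ∑ n ∈ Ioc u v with ¬ n.Prime, vonMangoldt n / n := by
  have hu0 : (0 : ℝ) < u := by exact_mod_cast hu
  rw [← nsmul_eq_mul, ← sum_const, sum_filter, sum_filter, ← sum_add_distrib]
  refine sum_le_sum fun n hn => ?_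
  obtain ⟨hun, hnv⟩ := mem_Ioc.mp hn
  have hun' : (u : ℝ) ≤ n := by exact_mod_cast hun.le
  have hle : vonMangoldt.residueClass a n / n ≤ vonMangoldt n / n := by
    gcongr
    exact vonMangoldt.residueClass_le a n
  by_cases hp : n.Prime
  · rcases em ((n : ZMod N) = a) with ha | ha
    · simp only [hp, ha, and_self, if_true, not_true_eq_false, if_false, add_zero]
      rw [vonMangoldt_apply_prime hp] at hle
      have hlog : Real.log n ≤ Real.log v :=
        Real.log_le_log (hu0.trans_le hun') (by exact_mod_cast hnv)
      have := Real.log_natCast_nonneg n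
      exact hle.trans (by gcongr)
    · simp [vonMangoldt.residueClass, ha, hp]
  · simpa [hp] using hle

theorem exists_div_log_le_card_primes_Ioc {a : ZMod N} (ha : IsUnit a) :
    ∃ A : ℕ, 1 < A ∧ ∀ u : ℕ, 1 ≤ u →
      u / Real.log (A * u) ≤ #{l ∈ Ioc u (A * u) | Nat.Prime l ∧ (l : ZMod N) = a} := by
  obtain ⟨B, hB⟩ := exists_abs_totient_mul_sum_residueClass_div_sub_log_le ha
  obtain ⟨B', hB'⟩ := exists_sum_nonprime_vonMangoldt_div_le
  have hφ : (0 : ℝ) < N.totient := by exact_mod_cast Nat.totient_pos.mpr (NeZero.pos N)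
  obtain ⟨A, hA⟩ := exists_nat_gt (Real.exp (N.totient * (1 + B') + 2 * B) + 1)
  have hA1 : (1 : ℝ) < A := by linarith [Real.exp_pos (N.totient * (1 + B') + 2 * B)]
  refine ⟨A, by exact_mod_cast hA1, fun u hu => ?_⟩
  have hu1 : (1 : ℝ) ≤ u := by exact_mod_cast hu
  have huA : u ≤ A * u := Nat.le_mul_of_pos_left u (by exact_mod_cast zero_lt_one.trans hA1)
  have hlog : 0 < Real.log (A * u) := Real.log_pos (by nlinarith)
  have hlogA : N.totient * (1 + B') + 2 * B ≤ Real.log A :=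
    (Real.le_log_iff_exp_le (by linarith)).mpr (by linarith)
  have hres : 1 + B' ≤ ∑ n ∈ Ioc u (A * u), vonMangoldt.residueClass a n / n := by
    refine le_of_mul_le_mul_left ?_ hφ
    have hsplit := sum_Ioc_consecutive (fun n : ℕ => vonMangoldt.residueClass a n / n)
      (Nat.zero_le u) huA
    have hsmall := abs_le.mp (hB u hu)
    have hlarge := abs_le.mp (hB (A * u) (hu.trans huA))
    rw [Nat.cast_mul, Real.log_mul (by linarith) (by linarith), ← hsplit, mul_add] at hlarge
    linarith
  have hcard := sum_Ioc_residueClass_div_le a hu (v := A * u)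
  have hone : (1 : ℝ) ≤
      #{l ∈ Ioc u (A * u) | Nat.Prime l ∧ (l : ZMod N) = a} * (Real.log (A * u) / u) := by
    push_cast at hcard
    linarith [hB' (Ioc u (A * u))]
  rw [div_le_iff₀ hlog]
  rwa [mul_div_assoc', one_le_div (by linarith)] at hone

end PrimesInProgressions

section ScalarFactorization

variable {ι κ R S : Type*} [Fintype ι] [DecidableEq κ] [CommRing R] [CommRing S]

variable (κ) in
/-- The scalar matrix `Δ` of size `κ` factors through `B`. Over a field and for `Δ ≠ 0` this says
that `B` has rank at least `|κ|`; unlike the rank, it is stable under base change. -/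
def ScalarFactorsThrough (Δ : R) (B : Matrix ι ι R) : Prop :=
  ∃ (P : Matrix κ ι R) (X : Matrix ι κ R), P * B * X = Δ • (1 : Matrix κ κ R)

theorem ScalarFactorsThrough.map {Δ : R} {B : Matrix ι ι R} (h : ScalarFactorsThrough κ Δ B)
    (f : R →+* S) : ScalarFactorsThrough κ (f Δ) (B.map f) := by
  obtain ⟨P, X, hPX⟩ := h
  refine ⟨P.map f, X.map f, ?_⟩
  rw [← Matrix.map_mul, ← Matrix.map_mul, hPX, Matrix.map_smul' _ _ _ (map_mul f),
    Matrix.map_one _ (map_zero f) (map_one f)]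

theorem ScalarFactorsThrough.smul {Δ : R} {B : Matrix ι ι R} (h : ScalarFactorsThrough κ Δ B)
    (c : R) : ScalarFactorsThrough κ (c * Δ) (c • B) := by
  obtain ⟨P, X, hPX⟩ := h
  refine ⟨P, X, ?_⟩
  rw [Matrix.mul_smul, Matrix.smul_mul, hPX, smul_smul]

theorem card_ker_mul_card_range {M M' : Type*} [AddCommGroup M] [AddCommGroup M']
    [Module R M] [Module R M'] (f : M →ₗ[R] M') :
    Nat.card (LinearMap.ker f) * Nat.card (LinearMap.range f) = Nat.card M := by
  rw [← AddSubgroup.card_mul_index f.toAddMonoidHom.ker, AddSubgroup.index_ker]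
  rfl

theorem ScalarFactorsThrough.card_ker_mul_le [Fintype κ] [Finite R] {Δ : R} {B : Matrix ι ι R}
    (h : ScalarFactorsThrough κ Δ B) :
    Nat.card (LinearMap.ker B.mulVecLin) * Nat.card R ^ Fintype.card κ ≤
      Nat.card {t : R // Δ * t = 0} ^ Fintype.card κ * Nat.card R ^ Fintype.card ι := by
  obtain ⟨P, X, hPX⟩ := h
  let g : (κ → R) →ₗ[R] (κ → R) := Δ • LinearMap.id
  have hker : Nat.card (LinearMap.ker g) = Nat.card {t : R // Δ * t = 0} ^ Fintype.card κ := by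
    rw [← Nat.card_eq_fintype_card (α := κ), ← Nat.card_fun]
    refine Nat.card_congr ((Equiv.subtypeEquivRight fun v => ?_).trans
      (Equiv.subtypePiEquivPi (p := fun _ t => Δ * t = 0)))
    simp [g, funext_iff]
  have hrange : Nat.card (LinearMap.range g) ≤ Nat.card (LinearMap.range B.mulVecLin) := by
    have hle : LinearMap.range g ≤ (LinearMap.range B.mulVecLin).map P.mulVecLin := by
      rintro _ ⟨w, rfl⟩
      refine ⟨B *ᵥ X *ᵥ w, ⟨X *ᵥ w, rfl⟩, ?_⟩
      rw [mulVecLin_apply, mulVec_mulVec, mulVec_mulVec, hPX, smul_mulVec, one_mulVec]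
      rfl
    exact (Nat.card_mono (Set.toFinite _) hle).trans (Set.ncard_image_le (Set.toFinite _))
  have hB := card_ker_mul_card_range B.mulVecLin
  have hg := card_ker_mul_card_range g
  rw [Nat.card_fun, Nat.card_eq_fintype_card (α := ι)] at hB
  rw [Nat.card_fun, Nat.card_eq_fintype_card (α := κ), hker] at hg
  rw [← hB, ← hg, mul_left_comm, ← mul_assoc, ← mul_assoc, mul_assoc, mul_assoc]
  gcongr

theorem card_mul_eq_zero_of_isUnit {Δ : R} (hΔ : IsUnit Δ) : Nat.card {t : R // Δ * t = 0} = 1 := by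
  simp [hΔ.mul_right_eq_zero]

theorem card_intCast_mul_eq_zero_le (q : ℕ) [NeZero q] {Δ : ℤ} (hΔ : Δ ≠ 0) :
    Nat.card {t : ZMod q // (Δ : ZMod q) * t = 0} ≤ Δ.natAbs := by
  classical
  rw [Nat.card_eq_fintype_card, Fintype.card_subtype]
  refine le_of_eq_of_le (congrArg Finset.card (Finset.filter_congr fun t _ => ?_))
    (IsAddCyclic.card_nsmul_eq_zero_le (α := ZMod q) (Int.natAbs_pos.mpr hΔ))
  rw [natAbs_nsmul_eq_zero, zsmul_eq_mul]

end ScalarFactorization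

/-- A polynomial `xᵀ A x + L ⬝ x + k` of degree at most two in variables indexed by `ι`. The matrix
`A` need not be symmetric: over `ℤ` this allows odd cross terms. -/
structure QuadPoly (ι R : Type*) where
  A : Matrix ι ι R
  L : ι → R
  k : R

namespace QuadPoly

variable {ι κ R S : Type*} [CommRing R] [CommRing S]

/-- Base change of a quadratic polynomial along a ring homomorphism. -/
def map (f : R →+* S) (F : QuadPoly ι R) : QuadPoly ι S := ⟨F.A.map f, f ∘ F.L, f F.k⟩

/-- Reduction of an integral quadratic polynomial modulo `q`. -/
def mod (F : QuadPoly ι ℤ) (q : ℕ) : QuadPoly ι (ZMod q) := F.map (Int.castRingHom (ZMod q))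

/-- The Hessian matrix, constant since the degree is at most two. -/
def hessian (F : QuadPoly ι R) : Matrix ι ι R := F.A + F.Aᵀ

theorem hessian_map (f : R →+* S) (F : QuadPoly ι R) : (F.map f).hessian = F.hessian.map f := by
  ext i j
  simp [hessian, map]

theorem hessian_of_A_eq {F : QuadPoly ι R} {y₁ y₂ : R} {A₁ A₂ : Matrix ι ι R}
    (h : F.A = y₁ • A₁ + y₂ • A₂) : F.hessian = y₁ • (A₁ + A₁ᵀ) + y₂ • (A₂ + A₂ᵀ) := by
  rw [hessian, h, transpose_add, transpose_smul, transpose_smul, smul_add, smul_add,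
    add_add_add_comm]

theorem map_map {T : Type*} [CommRing T] (g : S →+* T) (f : R →+* S) (F : QuadPoly ι R) :
    (F.map f).map g = F.map (g.comp f) := rfl

variable [Fintype ι]

/-- The value of a quadratic polynomial at a point. -/
def eval (F : QuadPoly ι R) (x : ι → R) : R := x ⬝ᵥ F.A *ᵥ x + F.L ⬝ᵥ x + F.k

/-- The vector of partial derivatives at a point. -/
def grad (F : QuadPoly ι R) (x : ι → R) : ι → R := F.hessian *ᵥ x + F.L

theorem eval_map (f : R →+* S) (F : QuadPoly ι R) (x : ι → R) :
    (F.map f).eval (f ∘ x) = f (F.eval x) := by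
  simp [eval, map, dotProduct, mulVec]

theorem grad_map (f : R →+* S) (F : QuadPoly ι R) (x : ι → R) :
    (F.map f).grad (f ∘ x) = f ∘ F.grad x := by
  ext i
  simp [grad, hessian_map, RingHom.map_mulVec]
  rfl

theorem eval_mod (F : QuadPoly ι ℤ) (q : ℕ) (x : ι → ℤ) :
    (F.mod q).eval (fun i => (x i : ZMod q)) = (F.eval x : ℤ) :=
  F.eval_map (Int.castRingHom (ZMod q)) x

theorem eval_mod_comp (F : QuadPoly ι ℤ) {q Q : ℕ} (f : ZMod Q →+* ZMod q) (x : ι → ZMod Q) :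
    (F.mod q).eval (f ∘ x) = f ((F.mod Q).eval x) := by
  rw [← eval_map, mod, mod, map_map, RingHom.ext_int (f.comp _)]

theorem eval_add (F : QuadPoly ι R) (x h : ι → R) :
    F.eval (x + h) = F.eval x + (F.grad x ⬝ᵥ h + h ⬝ᵥ F.A *ᵥ h) := by
  simp only [eval, grad, hessian, mulVec_add, add_mulVec, add_dotProduct, dotProduct_add,
    mulVec_transpose, ← dotProduct_mulVec]
  rw [dotProduct_comm h (F.A *ᵥ x)]
  ring

end QuadPoly

section CharacterSums

open Finset

variable {ι R : Type*} [Fintype ι] [DecidableEq ι] [CommRing R] [Fintype R] {ψ : AddChar R ℂ}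

theorem sum_addChar_dotProduct [DecidableEq R] (hψ : ψ.IsPrimitive) (v : ι → R) :
    ∑ x : ι → R, ψ (x ⬝ᵥ v) = if v = 0 then (Fintype.card R : ℂ) ^ Fintype.card ι else 0 := by
  have hprod : ∑ x : ι → R, ψ (x ⬝ᵥ v) = ∏ i, ∑ t, ψ (t * v i) := by
    rw [prod_univ_sum, Fintype.piFinset_univ]
    exact sum_congr rfl fun x _ =>
      map_prod ψ.toMonoidHom (fun i => Multiplicative.ofAdd (x i * v i)) univ
  simp only [hprod, AddChar.sum_mulShift _ hψ]
  split_ifs with hv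
  · simp [hv]
  · obtain ⟨i, hi : v i ≠ 0⟩ := Function.ne_iff.mp hv
    exact prod_eq_zero (mem_univ i) (by simp [hi])

namespace QuadPoly

theorem sum_addChar_eval_mul_conj (F : QuadPoly ι R) (ψ : AddChar R ℂ) :
    (∑ x, ψ (F.eval x)) * starRingEnd ℂ (∑ x, ψ (F.eval x)) =
      ∑ h, ψ (F.eval h - F.k) * ∑ x, ψ (x ⬝ᵥ F.hessian *ᵥ h) := by
  have hdiff : ∀ x h, F.eval (x + h) - F.eval x = F.eval h - F.k + x ⬝ᵥ F.hessian *ᵥ h := by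
    intro x h
    rw [add_comm, eval_add, grad, add_dotProduct, dotProduct_comm (F.hessian *ᵥ h)]
    simp only [eval]
    ring
  calc _ = ∑ x, ∑ y, ψ (F.eval y - F.eval x) := by
        rw [map_sum, sum_mul_sum, sum_comm]
        simp only [sub_eq_add_neg, AddChar.map_add_eq_mul, AddChar.map_neg_eq_conj]
    _ = ∑ x, ∑ h, ψ (F.eval h - F.k) * ψ (x ⬝ᵥ F.hessian *ᵥ h) := by
        refine sum_congr rfl fun x _ => ?_
        rw [← Equiv.sum_comp (Equiv.addLeft x)]
        simp only [Equiv.coe_addLeft, hdiff, AddChar.map_add_eq_mul]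
    _ = _ := by
        rw [sum_comm]
        simp only [mul_sum]

-- Weyl differencing
theorem norm_sum_addChar_eval_sq_le (F : QuadPoly ι R) (hψ : ψ.IsPrimitive) :
    ‖∑ x, ψ (F.eval x)‖ ^ 2 ≤
      Fintype.card R ^ Fintype.card ι * Nat.card (LinearMap.ker F.hessian.mulVecLin) := by
  classical
  have hker : #{h | F.hessian *ᵥ h = 0} = Nat.card (LinearMap.ker F.hessian.mulVecLin) := by
    rw [← Fintype.card_subtype, ← Nat.card_eq_fintype_card]
    rfl
  have hnorm : ‖∑ x, ψ (F.eval x)‖ ^ 2 =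
      ‖(∑ x, ψ (F.eval x)) * starRingEnd ℂ (∑ x, ψ (F.eval x))‖ := by
    rw [norm_mul, RCLike.norm_conj, sq]
  calc _ = ‖∑ h, ψ (F.eval h - F.k) * ∑ x, ψ (x ⬝ᵥ F.hessian *ᵥ h)‖ := by
        rw [hnorm, sum_addChar_eval_mul_conj]
    _ ≤ ∑ h, if F.hessian *ᵥ h = 0 then (Fintype.card R : ℝ) ^ Fintype.card ι else 0 := by
        refine norm_sum_le_of_le _ fun h _ => le_of_eq ?_
        rw [norm_mul, AddChar.norm_apply, one_mul, sum_addChar_dotProduct hψ, apply_ite norm]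
        simp
    _ = _ := by
        rw [← sum_filter, sum_const, nsmul_eq_mul, hker, mul_comm]

theorem norm_sum_addChar_eval_sq_mul_le {κ : Type*} [Fintype κ] [DecidableEq κ] (F : QuadPoly ι R)
    (hψ : ψ.IsPrimitive) {Δ : R} (h : ScalarFactorsThrough κ Δ F.hessian) :
    ‖∑ x, ψ (F.eval x)‖ ^ 2 * Fintype.card R ^ Fintype.card κ ≤
      Nat.card {t : R // Δ * t = 0} ^ Fintype.card κ *
        (Fintype.card R ^ Fintype.card ι) ^ 2 := by
  have hker : (Nat.card (LinearMap.ker F.hessian.mulVecLin) * Fintype.card R ^ Fintype.card κ : ℝ) ≤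
      Nat.card {t : R // Δ * t = 0} ^ Fintype.card κ * Fintype.card R ^ Fintype.card ι := by
    have := h.card_ker_mul_le
    rw [Nat.card_eq_fintype_card (α := R)] at this
    exact_mod_cast this
  calc _ ≤ (Fintype.card R ^ Fintype.card ι : ℝ) *
          (Nat.card (LinearMap.ker F.hessian.mulVecLin) * Fintype.card R ^ Fintype.card κ) := by
        rw [← mul_assoc]
        gcongr
        exact F.norm_sum_addChar_eval_sq_le hψ
    _ ≤ (Fintype.card R ^ Fintype.card ι : ℝ) *
          (Nat.card {t : R // Δ * t = 0} ^ Fintype.card κ * Fintype.card R ^ Fintype.card ι) := by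
        gcongr
    _ = _ := by ring

end QuadPoly

end CharacterSums

section SumOverFibers

open Finset

theorem card_mul_sum_comp_of_surjective {G H : Type*} [AddGroup G] [AddGroup H] [Fintype G]
    [Fintype H] (f : G →+ H) (hf : Function.Surjective f) (φ : H → ℂ) :
    Fintype.card H * ∑ g, φ (f g) = Fintype.card G * ∑ h, φ h := by
  classical
  have hfiber : ∀ h, #{g | f g = h} = #{g | f g = 0} := fun h =>
    AddMonoidHom.card_fiber_eq_of_mem_range f (hf h) (hf 0)
  have hsum : ∀ φ : H → ℂ, ∑ g, φ (f g) = #{g | f g = 0} * ∑ h, φ h := fun φ => by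
    rw [← sum_fiberwise univ f, mul_sum]
    refine sum_congr rfl fun h _ => ?_
    rw [sum_congr rfl fun g hg => congrArg φ (mem_filter.mp hg).2, sum_const,
      hfiber, nsmul_eq_mul]
  have hcard := hsum fun _ => 1
  simp only [sum_const, nsmul_eq_mul, mul_one, card_univ] at hcard
  rw [hsum, hcard]
  ring

theorem sum_range_eq_sum_divisors_sum_coprime {M : Type*} [AddCommMonoid M] {Q : ℕ} (hQ : Q ≠ 0)
    (f : ℕ → M) :
    ∑ a ∈ range Q, f a =
      ∑ q ∈ Q.divisors, ∑ a ∈ (range q).filter fun a => Nat.gcd a q = 1, f (Q / q * a) := by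
  have hgcd : ∀ a, 0 < Nat.gcd a Q := fun a => Nat.gcd_pos_of_pos_right a (Nat.pos_of_ne_zero hQ)
  rw [sum_sigma']
  symm
  refine sum_bij' (fun p _ => Q / p.1 * p.2) (fun a _ => ⟨Q / Nat.gcd a Q, a / Nat.gcd a Q⟩)
    (fun ⟨q, a⟩ hp => ?_) (fun a ha => ?_) (fun ⟨q, a⟩ hp => ?_) (fun a _ => ?_) fun _ _ => rfl
  · simp only [mem_sigma, Nat.mem_divisors, mem_filter, mem_range] at hp ⊢
    obtain ⟨⟨⟨d, rfl⟩, -⟩, haq, -⟩ := hp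
    rw [Nat.mul_div_cancel_left _ (Nat.zero_lt_of_lt haq), mul_comm q]
    exact Nat.mul_lt_mul_of_pos_left haq (Nat.pos_of_ne_zero (right_ne_zero_of_mul hQ))
  · simp only [mem_sigma, Nat.mem_divisors, mem_filter, mem_range] at ha ⊢
    exact ⟨⟨Nat.div_dvd_of_dvd (Nat.gcd_dvd_right a Q), hQ⟩,
      Nat.div_lt_div_of_lt_of_dvd (Nat.gcd_dvd_right a Q) ha,
      Nat.coprime_div_gcd_div_gcd (hgcd a)⟩
  · simp only [mem_sigma, Nat.mem_divisors, mem_filter, mem_range] at hp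
    obtain ⟨⟨⟨d, rfl⟩, -⟩, haq, hcop⟩ := hp
    have hd : 0 < d := Nat.pos_of_ne_zero (right_ne_zero_of_mul hQ)
    have hgcd_eq : Nat.gcd (d * a) (q * d) = d := by
      rw [mul_comm q, Nat.gcd_mul_left, hcop, mul_one]
    simp only [Nat.mul_div_cancel_left _ (Nat.zero_lt_of_lt haq), hgcd_eq,
      Nat.mul_div_cancel _ hd, Nat.mul_div_cancel_left _ hd]
  · have hdvd := Nat.gcd_dvd_right a Q
    simp only [Nat.div_div_self hdvd hQ, Nat.mul_div_cancel' (Nat.gcd_dvd_left a Q)]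

end SumOverFibers

section GaussAverages

open Finset

theorem isPrimitive_mulShift_of_isUnit {R R' : Type*} [CommRing R] [CommMonoid R']
    {ψ : AddChar R R'} (hψ : ψ.IsPrimitive) {a : R} (ha : IsUnit a) :
    (ψ.mulShift a).IsPrimitive := fun r hr => by
  rw [AddChar.mulShift_mulShift]
  exact hψ (mt ha.mul_right_eq_zero.mp hr)

theorem stdAddChar_natCast_mul {q d : ℕ} [NeZero q] [NeZero (q * d)] (z : ZMod (q * d)) :
    ZMod.stdAddChar ((d : ZMod (q * d)) * z) =
      ZMod.stdAddChar (ZMod.castHom (dvd_mul_right q d) (ZMod q) z) := by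
  obtain ⟨z, rfl⟩ := ZMod.intCast_surjective z
  have hd : (d : ℂ) ≠ 0 := by exact_mod_cast right_ne_zero_of_mul (NeZero.ne (q * d))
  rw [map_intCast, ← Int.cast_natCast, ← Int.cast_mul, ZMod.stdAddChar_coe, ZMod.stdAddChar_coe]
  congr 1
  push_cast
  field_simp

theorem bijective_fin_natCast_zmod (q : ℕ) [NeZero q] :
    Function.Bijective fun a : Fin q => ((a : ℕ) : ZMod q) := by
  refine (Fintype.bijective_iff_injective_and_card _).mpr ⟨fun a b hab => Fin.ext ?_, by simp⟩
  have := (ZMod.natCast_eq_natCast_iff' a b q).mp hab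
  rwa [Nat.mod_eq_of_lt a.2, Nat.mod_eq_of_lt b.2] at this

namespace QuadPoly

variable {ι κ : Type*} [Fintype ι] [Fintype κ] [DecidableEq κ]

/-- The number of zeros of a quadratic polynomial over a finite ring. -/
noncomputable def zeroCount {R : Type*} [CommRing R] (F : QuadPoly ι R) : ℕ :=
  Nat.card {x : ι → R // F.eval x = 0}

/-- The density of zeros modulo `Q`, normalized so that equidistributed values give `1`. -/
noncomputable def density (F : QuadPoly ι ℤ) (Q : ℕ) : ℝ :=
  Q * (F.mod Q).zeroCount / (Q : ℝ) ^ Fintype.card ι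

variable [DecidableEq ι]

/-- The normalized Gauss sum `q^{-|ι|} ∑ e(a F(x) / q)` over `x` modulo `q`. -/
noncomputable def gaussAverage (F : QuadPoly ι ℤ) (q : ℕ) [NeZero q] (a : ZMod q) : ℂ :=
  (∑ x : ι → ZMod q, ZMod.stdAddChar (a * (F.mod q).eval x)) / (q : ℂ) ^ Fintype.card ι

theorem gaussAverage_natCast_mul (F : QuadPoly ι ℤ) {q d : ℕ} [NeZero q] [NeZero (q * d)] (a : ℕ) :
    F.gaussAverage (q * d) ((d * a : ℕ) : ZMod (q * d)) = F.gaussAverage q a := by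
  have hterm : ∀ x : ι → ZMod (q * d),
      ZMod.stdAddChar (((d * a : ℕ) : ZMod (q * d)) * (F.mod (q * d)).eval x) =
        ZMod.stdAddChar ((a : ZMod q) *
          (F.mod q).eval (ZMod.castHom (dvd_mul_right q d) (ZMod q) ∘ x)) := fun x => by
    rw [Nat.cast_mul, mul_assoc, stdAddChar_natCast_mul, map_mul, map_natCast, ← eval_mod_comp]
  have hfiber := card_mul_sum_comp_of_surjective
    ((ZMod.castHom (dvd_mul_right q d) (ZMod q)).toAddMonoidHom.compLeft ι)
    (ZMod.castHom_surjective (dvd_mul_right q d)).comp_left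
    fun y => ZMod.stdAddChar ((a : ZMod q) * (F.mod q).eval y)
  simp only [Fintype.card_fun, ZMod.card, Nat.cast_pow, Nat.cast_mul] at hfiber
  have hq : (q : ℂ) ≠ 0 := by exact_mod_cast NeZero.ne q
  have hqd : ((q * d : ℕ) : ℂ) ≠ 0 := by exact_mod_cast NeZero.ne (q * d)
  rw [gaussAverage, gaussAverage, div_eq_div_iff (pow_ne_zero _ hqd) (pow_ne_zero _ hq),
    sum_congr rfl fun x _ => hterm x, mul_comm, Nat.cast_mul]
  exact hfiber.trans (mul_comm _ _)

theorem sum_gaussAverage (F : QuadPoly ι ℤ) (Q : ℕ) [NeZero Q] :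
    ∑ a ∈ range Q, F.gaussAverage Q (a : ZMod Q) = F.density Q := by
  have hcount : (F.mod Q).zeroCount = #{x : ι → ZMod Q | (F.mod Q).eval x = 0} := by
    rw [zeroCount, Nat.card_eq_fintype_card, Fintype.card_subtype]
  simp only [gaussAverage]
  rw [sum_range, (bijective_fin_natCast_zmod Q).sum_comp (fun a => (∑ x : ι → ZMod Q,
    ZMod.stdAddChar (a * (F.mod Q).eval x)) / (Q : ℂ) ^ Fintype.card ι), ← sum_div, sum_comm]
  simp only [AddChar.sum_mulShift _ (ZMod.isPrimitive_stdAddChar Q), ZMod.card]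
  rw [← Nat.cast_sum, ← sum_filter, sum_const, ← hcount, density]
  push_cast
  rw [smul_eq_mul, Nat.cast_mul, mul_comm (Q : ℂ)]

theorem norm_gaussAverage_le (F : QuadPoly ι ℤ) {Δ : ℤ} {q : ℕ} [NeZero q] {C : ℕ}
    (hC : Nat.card {t : ZMod q // (Δ : ZMod q) * t = 0} ≤ C)
    (h : ScalarFactorsThrough κ (Δ : ZMod q) (F.mod q).hessian) {a : ZMod q} (ha : IsUnit a) :
    ‖F.gaussAverage q a‖ ≤ √(((C : ℝ) / q) ^ Fintype.card κ) := by
  have hq : (0 : ℝ) < q := by exact_mod_cast NeZero.pos q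
  have hsum := (F.mod q).norm_sum_addChar_eval_sq_mul_le
    (isPrimitive_mulShift_of_isUnit (ZMod.isPrimitive_stdAddChar q) ha) h
  simp only [AddChar.mulShift_apply, ZMod.card] at hsum
  refine Real.le_sqrt_of_sq_le ?_
  rw [gaussAverage, norm_div, norm_pow, Complex.norm_natCast, div_pow, div_pow,
    div_le_div_iff₀ (by positivity) (by positivity)]
  refine hsum.trans ?_
  gcongr

theorem zpow_mul_expSum_eval {m : ℕ} (F : QuadPoly (Fin m) ℤ) (q : ℕ) [NeZero q] :
    (q : ℂ) ^ (-(m : ℤ)) * expSum m F.eval q =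
      ∑ a ∈ (range q).filter fun a => Nat.gcd a q = 1, F.gaussAverage q (a : ZMod q) := by
  have hbij : Function.Bijective fun (b : Fin m → Fin q) j => ((b j : ℕ) : ZMod q) :=
    Function.Bijective.comp_left (bijective_fin_natCast_zmod q)
  rw [expSum, mul_sum]
  refine sum_congr rfl fun a _ => ?_
  rw [gaussAverage, ← hbij.sum_comp, Fintype.card_fin, _root_.zpow_neg, zpow_natCast, mul_comm,
    div_eq_mul_inv]
  congr 1
  refine sum_congr rfl fun b _ => ?_
  have heval := F.eval_mod q fun j => ((b j : ℕ) : ℤ)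
  simp only [Int.cast_natCast] at heval
  have hmul : (a : ZMod q) * (F.eval fun j => ((b j : ℕ) : ℤ) : ℤ) =
      (((a : ℤ) * F.eval fun j => ((b j : ℕ) : ℤ) : ℤ) : ZMod q) := by push_cast; rfl
  rw [heval, hmul, ZMod.stdAddChar_coe]
  push_cast
  congr 1
  ring

end QuadPoly

end GaussAverages

section SingularSeries

open Finset Filter Topology

namespace QuadPoly

theorem sum_divisors_eq_density {m : ℕ} (F : QuadPoly (Fin m) ℤ) {Q : ℕ} (hQ : Q ≠ 0) :
    ∑ q ∈ Q.divisors, (q : ℂ) ^ (-(m : ℤ)) * expSum m F.eval q = F.density Q := by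
  have : NeZero Q := ⟨hQ⟩
  rw [← sum_gaussAverage, sum_range_eq_sum_divisors_sum_coprime hQ]
  refine sum_congr rfl fun q hq => ?_
  obtain ⟨d, rfl⟩ := Nat.dvd_of_mem_divisors hq
  have : NeZero q := ⟨left_ne_zero_of_mul hQ⟩
  rw [zpow_mul_expSum_eval, Nat.mul_div_cancel_left d (NeZero.pos q)]
  exact sum_congr rfl fun a _ => (F.gaussAverage_natCast_mul a).symm

theorem norm_zpow_mul_expSum_le {m : ℕ} {F : QuadPoly (Fin m) ℤ} {Δ : ℤ} (hΔ : Δ ≠ 0)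
    (h : ScalarFactorsThrough (Fin 5) Δ F.hessian) (q : ℕ) :
    ‖(q : ℂ) ^ (-(m : ℤ)) * expSum m F.eval q‖ ≤
      √((Δ.natAbs : ℝ) ^ 5) * (1 / (q : ℝ) ^ (3 / 2 : ℝ)) := by
  rcases Nat.eq_zero_or_pos q with rfl | hq
  · simp [expSum]
  have : NeZero q := ⟨hq.ne'⟩
  have hq' : (0 : ℝ) < q := by exact_mod_cast hq
  have hmod : ScalarFactorsThrough (Fin 5) (Δ : ZMod q) (F.mod q).hessian := by
    rw [mod, hessian_map]
    exact h.map (Int.castRingHom (ZMod q))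
  have hterm : ∀ a ∈ (range q).filter fun a => Nat.gcd a q = 1,
      ‖F.gaussAverage q (a : ZMod q)‖ ≤ √(((Δ.natAbs : ℝ) / q) ^ 5) := fun a ha => by
    have hunit := (ZMod.isUnit_iff_coprime a q).mpr (mem_filter.mp ha).2
    simpa only [Fintype.card_fin] using
      F.norm_gaussAverage_le (card_intCast_mul_eq_zero_le q hΔ) hmod hunit
  have hcard : (#((range q).filter fun a => Nat.gcd a q = 1) : ℝ) ≤ q := by
    exact_mod_cast (card_filter_le _ _).trans_eq (card_range q)
  have hsqrt : √((q : ℝ) ^ 5) = q * (q : ℝ) ^ (3 / 2 : ℝ) := by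
    rw [Real.sqrt_eq_rpow, ← Real.rpow_natCast, ← Real.rpow_mul hq'.le,
      ← Real.rpow_one_add' hq'.le (by norm_num)]
    norm_num
  calc ‖(q : ℂ) ^ (-(m : ℤ)) * expSum m F.eval q‖
      ≤ #((range q).filter fun a => Nat.gcd a q = 1) • √(((Δ.natAbs : ℝ) / q) ^ 5) := by
        rw [zpow_mul_expSum_eval]
        exact (norm_sum_le_of_le _ hterm).trans_eq (sum_const _)
    _ ≤ q * √(((Δ.natAbs : ℝ) / q) ^ 5) := by
        rw [nsmul_eq_mul]
        gcongr
    _ = √((Δ.natAbs : ℝ) ^ 5) * (1 / (q : ℝ) ^ (3 / 2 : ℝ)) := by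
        rw [div_pow, Real.sqrt_div (by positivity), hsqrt]
        field_simp

theorem summable_zpow_mul_expSum {m : ℕ} {F : QuadPoly (Fin m) ℤ} {Δ : ℤ} (hΔ : Δ ≠ 0)
    (h : ScalarFactorsThrough (Fin 5) Δ F.hessian) :
    Summable fun q : ℕ => (q : ℂ) ^ (-(m : ℤ)) * expSum m F.eval q :=
  .of_norm_bounded ((Real.summable_one_div_nat_rpow.mpr (by norm_num)).mul_left _)
    (norm_zpow_mul_expSum_le hΔ h)

theorem tendsto_density {m : ℕ} {F : QuadPoly (Fin m) ℤ} {Δ : ℤ} (hΔ : Δ ≠ 0)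
    (h : ScalarFactorsThrough (Fin 5) Δ F.hessian) {Q : ℕ → ℕ} (hQ : ∀ T, Q T ≠ 0)
    (hdvd : ∀ q, 0 < q → ∀ᶠ T in atTop, q ∣ Q T) :
    Tendsto (fun T => F.density (Q T)) atTop (𝓝 (singSeries m F.eval).re) := by
  have hexhaust : Tendsto (fun T => insert 0 (Q T).divisors) atTop atTop := by
    refine tendsto_atTop.mpr fun s => (eventually_all_finset s).mpr fun q _ => ?_
    rcases Nat.eq_zero_or_pos q with rfl | hq
    · exact .of_forall fun T => mem_insert_self _ _
    · filter_upwards [hdvd q hq] with T hT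
      exact mem_insert_of_mem (Nat.mem_divisors.mpr ⟨hT, hQ T⟩)
  have hsum : ∀ T, ∑ q ∈ insert 0 (Q T).divisors, (q : ℂ) ^ (-(m : ℤ)) * expSum m F.eval q =
      F.density (Q T) := fun T => by
    rw [sum_insert (by simp), F.sum_divisors_eq_density (hQ T)]
    simp [expSum]
  refine ((Complex.continuous_re.tendsto _).comp
    ((summable_zpow_mul_expSum hΔ h).hasSum.comp hexhaust)).congr fun T => ?_
  rw [Function.comp_apply, Function.comp_apply, hsum, Complex.ofReal_re]

theorem zeroCount_mod_mul {ι : Type*} [Fintype ι] (F : QuadPoly ι ℤ) {a b : ℕ}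
    (hab : a.Coprime b) :
    (F.mod (a * b)).zeroCount = (F.mod a).zeroCount * (F.mod b).zeroCount := by
  let φ := ZMod.chineseRemainder hab
  rw [zeroCount, zeroCount, zeroCount, ← Nat.card_prod]
  refine Nat.card_congr ((Equiv.subtypeEquiv ((Equiv.piCongrRight fun _ => φ.toEquiv).trans
    (Equiv.arrowProdEquivProdArrow ι _ _)) fun x => ?_).trans Equiv.subtypeProdEquivProd)
  have hfst := F.eval_mod_comp ((RingHom.fst _ _).comp φ.toRingHom) x
  have hsnd := F.eval_mod_comp ((RingHom.snd _ _).comp φ.toRingHom) x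
  rw [← φ.map_eq_zero_iff, Prod.ext_iff]
  exact and_congr (Eq.congr_left hfst.symm) (Eq.congr_left hsnd.symm)

section Density

variable {ι : Type*} [Fintype ι] (F : QuadPoly ι ℤ)

theorem density_nonneg (Q : ℕ) : 0 ≤ F.density Q := by
  unfold density
  positivity

theorem density_mul {a b : ℕ} (hab : a.Coprime b) :
    F.density (a * b) = F.density a * F.density b := by
  rw [density, density, density, F.zeroCount_mod_mul hab]
  push_cast
  rw [mul_pow, div_mul_div_comm, mul_mul_mul_comm]

theorem density_one : F.density 1 = 1 := by
  have : Subsingleton (ZMod 1) := inferInstanceAs (Subsingleton (Fin 1))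
  have hcount : (F.mod 1).zeroCount = 1 :=
    Nat.card_eq_one_iff_unique.mpr ⟨inferInstance, ⟨⟨0, Subsingleton.elim _ _⟩⟩⟩
  simp [density, hcount]

theorem density_prod_pow {s : Finset ℕ} (hs : ∀ p ∈ s, p.Prime) (T : ℕ) :
    F.density (∏ p ∈ s, p ^ T) = ∏ p ∈ s, F.density (p ^ T) := by
  classical
  induction s using Finset.induction_on with
  | empty => simp [density_one]
  | insert p s hp ih =>
    have hs' : ∀ p ∈ s, p.Prime := fun p hp => hs p (mem_insert_of_mem hp)
    rw [prod_insert hp, prod_insert hp, ← ih hs', density_mul]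
    refine Nat.Coprime.prod_right fun r hr => Nat.Coprime.pow _ _ ?_
    exact (Nat.coprime_primes (hs p (mem_insert_self _ _)) (hs' r hr)).mpr
      (ne_of_mem_of_not_mem hr hp).symm

end Density

end QuadPoly

theorem one_sub_sum_le_prod_one_sub {ι R : Type*} [CommRing R] [LinearOrder R]
    [IsStrictOrderedRing R] {s : Finset ι} {f : ι → R} (hf : ∀ i ∈ s, f i ∈ Set.Icc 0 1) :
    1 - ∑ i ∈ s, f i ≤ ∏ i ∈ s, (1 - f i) := by
  classical
  induction s using Finset.induction_on with
  | empty => simp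
  | insert i s hi ih =>
    have hs : ∀ j ∈ s, f j ∈ Set.Icc 0 1 := fun j hj => hf j (mem_insert_of_mem hj)
    obtain ⟨h₀, h₁⟩ := hf i (mem_insert_self _ _)
    have := mul_le_mul_of_nonneg_left (ih hs) (sub_nonneg.mpr h₁)
    have := mul_nonneg h₀ (sum_nonneg fun j hj => (hs j hj).1)
    rw [prod_insert hi, sum_insert hi]
    linarith

theorem dvd_pow_mul_prod_primes_pow (N : ℕ) {q T : ℕ} (hq : 0 < q) (hT : q < T) :
    q ∣ N ^ T * ∏ p ∈ range T with p.Prime ∧ ¬p ∣ N, p ^ T := by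
  have hrad : q ∣ (∏ p ∈ q.primeFactors, p) ^ T := by
    conv_lhs => rw [← Nat.prod_factorization_pow_eq_self hq.ne']
    rw [← prod_pow]
    exact prod_dvd_prod_of_dvd _ _ fun p _ =>
      pow_dvd_pow _ ((Nat.factorization_lt p hq.ne').trans hT).le
  rw [prod_pow, ← mul_pow]
  refine hrad.trans (pow_dvd_pow_of_dvd (prod_primes_dvd _
    (fun p hp => (Nat.prime_of_mem_primeFactors hp).prime) fun p hp => ?_) _)
  by_cases hpN : p ∣ N
  · exact hpN.mul_right _
  · have hpT : p < T := (Nat.le_of_dvd hq (Nat.dvd_of_mem_primeFactors hp)).trans_lt hT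
    exact (dvd_prod_of_mem id (mem_filter.mpr
      ⟨mem_range.mpr hpT, Nat.prime_of_mem_primeFactors hp, hpN⟩)).mul_left _

theorem QuadPoly.mul_one_sub_le_re_singSeries {m : ℕ} {F : QuadPoly (Fin m) ℤ} {Δ : ℤ} (hΔ : Δ ≠ 0)
    (h : ScalarFactorsThrough (Fin 5) Δ F.hessian) {N : ℕ} (hN : N ≠ 0) {α ε : ℝ} (hα : 0 ≤ α)
    (hNα : ∀ T, α ≤ F.density (N ^ (T + 1))) {err : ℕ → ℝ}
    (herr : ∀ p, p.Prime → ¬p ∣ N → err p ∈ Set.Icc 0 1)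
    (hdensity : ∀ p, p.Prime → ¬p ∣ N → ∀ T, 1 - err p ≤ F.density (p ^ (T + 1)))
    (hsum : ∀ s : Finset ℕ, (∀ p ∈ s, p.Prime ∧ ¬p ∣ N) → ∑ p ∈ s, err p ≤ ε) :
    α * (1 - ε) ≤ (singSeries m F.eval).re := by
  let s : ℕ → Finset ℕ := fun T => {p ∈ range (T + 1) | p.Prime ∧ ¬p ∣ N}
  have hs : ∀ T, ∀ p ∈ s T, p.Prime ∧ ¬p ∣ N := fun T p hp => (mem_filter.mp hp).2
  have hlim := tendsto_density hΔ h (Q := fun T => N ^ (T + 1) * ∏ p ∈ s T, p ^ (T + 1))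
    (fun T => mul_ne_zero (pow_ne_zero _ hN)
      (prod_ne_zero_iff.mpr fun p hp => pow_ne_zero _ (hs T p hp).1.ne_zero))
    (fun q hq => (eventually_ge_atTop q).mono fun T hT =>
      dvd_pow_mul_prod_primes_pow N hq (Nat.lt_succ_of_le hT))
  refine ge_of_tendsto' hlim fun T => ?_
  have hcop : Nat.Coprime (N ^ (T + 1)) (∏ p ∈ s T, p ^ (T + 1)) :=
    Nat.Coprime.prod_right fun p hp =>
      (((hs T p hp).1.coprime_iff_not_dvd.mpr (hs T p hp).2).symm).pow _ _
  rw [density_mul _ hcop, density_prod_pow _ fun p hp => (hs T p hp).1]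
  have hprod : 1 - ε ≤ ∏ p ∈ s T, F.density (p ^ (T + 1)) :=
    calc 1 - ε ≤ 1 - ∑ p ∈ s T, err p := sub_le_sub_left (hsum _ (hs T)) 1
      _ ≤ ∏ p ∈ s T, (1 - err p) :=
        one_sub_sum_le_prod_one_sub fun p hp => herr p (hs T p hp).1 (hs T p hp).2
      _ ≤ ∏ p ∈ s T, F.density (p ^ (T + 1)) := prod_le_prod
        (fun p hp => sub_nonneg.mpr (herr p (hs T p hp).1 (hs T p hp).2).2)
        fun p hp => hdensity p (hs T p hp).1 (hs T p hp).2 T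
  calc α * (1 - ε) ≤ α * ∏ p ∈ s T, F.density (p ^ (T + 1)) := mul_le_mul_of_nonneg_left hprod hα
    _ ≤ _ := mul_le_mul_of_nonneg_right (hNα T) (prod_nonneg fun p _ => F.density_nonneg _)

end SingularSeries

section HenselLifting

open Finset

theorem exists_add_mul_add_mul_sq_eq_zero {R : Type*} [CommRing R] [Finite R] {w d : R}
    (hw : IsUnit w) (hd : IsNilpotent d) (c : R) : ∃ t, c + w * t + d * t ^ 2 = 0 := by
  have hinj : Function.Injective fun t => w * t + d * t ^ 2 := by
    intro t t' htt'
    have hunit : IsUnit (w + d * (t + t')) :=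
      ((Commute.all _ _).isNilpotent_mul_right hd).isUnit_add_left_of_commute hw (Commute.all _ _)
    exact sub_eq_zero.mp (hunit.mul_right_eq_zero.mp (by linear_combination htt'))
  obtain ⟨t, ht⟩ := Finite.injective_iff_surjective.mp hinj (-c)
  exact ⟨t, by linear_combination ht⟩

theorem isUnit_intCast_of_isCoprime_of_dvd_pow {q n : ℕ} {w D : ℤ} (hw : IsCoprime w D)
    (hq : (q : ℤ) ∣ D ^ n) : IsUnit (w : ZMod q) := by
  obtain ⟨u, v, huv⟩ := (hw.pow_right (n := n)).of_isCoprime_of_dvd_right hq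
  refine .of_mul_eq_one (u : ZMod q) ?_
  simpa [mul_comm] using congrArg (Int.cast : ℤ → ZMod q) huv

namespace QuadPoly

section HenselLift

variable {ι : Type*} [Fintype ι] [DecidableEq ι] {F : QuadPoly ι ℤ} {x : ι → ℤ} {i : ι} {g D w : ℤ}

theorem exists_dvd_eval_add_single {q : ℕ} [NeZero q] (hx : g ^ 2 * D ∣ F.eval x)
    (hgrad : F.grad x i = g * w) (hw : IsUnit (w : ZMod q)) (hD : IsNilpotent (D : ZMod q)) :
    ∃ t, g ^ 2 * D * q ∣ F.eval (x + Pi.single i (g * D * t)) := by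
  obtain ⟨c, hc⟩ := hx
  obtain ⟨t, ht⟩ := exists_add_mul_add_mul_sq_eq_zero hw
    ((Commute.all (D : ZMod q) (F.A i i : ZMod q)).isNilpotent_mul_right hD) (c : ZMod q)
  obtain ⟨t, rfl⟩ := ZMod.intCast_surjective t
  have hroot : (q : ℤ) ∣ c + w * t + D * F.A i i * t ^ 2 := by
    rw [← ZMod.intCast_zmod_eq_zero_iff_dvd]
    push_cast
    exact ht
  have heval : F.eval (x + Pi.single i (g * D * t)) =
      g ^ 2 * D * (c + w * t + D * F.A i i * t ^ 2) := by
    rw [eval_add, hc, dotProduct_single, hgrad, mulVec_single, single_dotProduct]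
    simp only [Pi.smul_apply, MulOpposite.smul_eq_mul_unop, MulOpposite.unop_op, col_apply]
    ring
  exact ⟨t, heval ▸ mul_dvd_mul_left _ hroot⟩

theorem exists_dvd_eval_add_smul_add_single {q : ℕ} [NeZero q] (hx : g ^ 2 * D ∣ F.eval x)
    (hgrad : F.grad x i = g * w) (hw : IsUnit (w : ZMod q)) (hD : IsNilpotent (D : ZMod q))
    (u : ι → ℤ) :
    ∃ t, g ^ 2 * D * q ∣ F.eval (x + (g ^ 2 * D) • u + Pi.single i (g * D * t)) := by
  have hgrad' : F.grad (x + (g ^ 2 * D) • u) i = g * (w + D * (g * (F.hessian *ᵥ u) i)) := by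
    have : F.grad (x + (g ^ 2 * D) • u) = F.grad x + (g ^ 2 * D) • (F.hessian *ᵥ u) := by
      rw [grad, grad, mulVec_add, mulVec_smul]
      abel
    rw [this, Pi.add_apply, hgrad, Pi.smul_apply, smul_eq_mul]
    ring
  refine exists_dvd_eval_add_single ?_ hgrad' ?_ hD
  · rw [eval_add, dotProduct_smul, smul_dotProduct, ← smul_add]
    exact dvd_add hx (dvd_mul_right _ _)
  · push_cast
    exact ((Commute.all _ _).isNilpotent_mul_right hD).isUnit_add_left_of_commute hw
      (Commute.all _ _)

omit [DecidableEq ι] in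
theorem pow_le_card_zeros_congr {N : ℕ} [NeZero N] (hN : (N : ℤ) = g ^ 2 * D) (hgD : g ∣ D)
    (hw : IsCoprime w D) (hx : (N : ℤ) ∣ F.eval x) (hgrad : F.grad x i = g * w) (T : ℕ) :
    (N ^ T) ^ (Fintype.card ι - 1) ≤
      Nat.card {y : ι → ZMod (N ^ (T + 1)) // (F.mod (N ^ (T + 1))).eval y = 0 ∧
        ∀ j, ∃ t : ℤ, y j = ((x j + D * t : ℤ) : ZMod (N ^ (T + 1)))} := by
  classical
  have hdvd : ((N ^ T : ℕ) : ℤ) ∣ D ^ (3 * T) := by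
    rw [pow_mul, pow_succ, Nat.cast_pow, hN]
    exact pow_dvd_pow_of_dvd (mul_dvd_mul_right (pow_dvd_pow_of_dvd hgD 2) D) T
  have hnil : IsNilpotent (D : ZMod (N ^ T)) := ⟨3 * T, by
    rwa [← Int.cast_pow, ZMod.intCast_zmod_eq_zero_iff_dvd]⟩
  let extend (u : {j // j ≠ i} → Fin (N ^ T)) (j : ι) : ℤ := if hj : j ≠ i then u ⟨j, hj⟩ else 0
  choose t ht using fun u => exists_dvd_eval_add_smul_add_single (hN ▸ hx) hgrad
    (isUnit_intCast_of_isCoprime_of_dvd_pow hw hdvd) hnil (extend u)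
  let lift (u) : ι → ℤ := x + (g ^ 2 * D) • extend u + Pi.single i (g * D * t u)
  have hcard : Nat.card ({j // j ≠ i} → Fin (N ^ T)) = (N ^ T) ^ (Fintype.card ι - 1) := by
    simp [Fintype.card_subtype_compl]
  rw [← hcard]
  refine Nat.card_le_card_of_injective
    (fun u => ⟨fun j => (lift u j : ZMod (N ^ (T + 1))), ?_, fun j => ?_⟩) fun u u' huu' => ?_
  · rw [eval_mod, ZMod.intCast_zmod_eq_zero_iff_dvd, pow_succ', Nat.cast_mul, hN]
    exact ht u
  · by_cases hj : j = i
    · exact ⟨g * t u, by subst hj; simp [lift, extend]; ring⟩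
    · exact ⟨g ^ 2 * extend u j, by simp [lift, hj]; ring⟩
  · ext ⟨j, hj⟩
    have hmod := congrFun (congrArg Subtype.val huu') j
    simp only [lift, extend, ← hN, Pi.add_apply, Pi.smul_apply, Pi.single_eq_of_ne hj,
      dif_pos hj, add_zero, Int.cast_add, add_right_inj, smul_eq_mul] at hmod
    norm_cast at hmod
    rw [ZMod.natCast_eq_natCast_iff, pow_succ'] at hmod
    exact (Nat.ModEq.mul_left_cancel' (NeZero.ne N) hmod).eq_of_lt_of_lt
      (u ⟨j, hj⟩).2 (u' ⟨j, hj⟩).2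

end HenselLift

variable {ι : Type*} [Fintype ι]

theorem mul_div_pow_le_density_pow [Nonempty ι] {F : QuadPoly ι ℤ} {N T c : ℕ} (hN : N ≠ 0)
    (h : c * (N ^ T) ^ (Fintype.card ι - 1) ≤ (F.mod (N ^ (T + 1))).zeroCount) :
    N * c / (N : ℝ) ^ Fintype.card ι ≤ F.density (N ^ (T + 1)) := by
  obtain ⟨k, hk⟩ := Nat.exists_eq_add_one.mpr (Fintype.card_pos (α := ι))
  rw [hk, Nat.add_sub_cancel] at h
  have : (c * (N ^ T) ^ k : ℝ) ≤ (F.mod (N ^ (T + 1))).zeroCount := by exact_mod_cast h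
  have : (0 : ℝ) < N := by exact_mod_cast Nat.pos_of_ne_zero hN
  rw [density, hk, div_le_div_iff₀ (by positivity) (by positivity)]
  push_cast
  calc (N * c * (N ^ (T + 1)) ^ (k + 1) : ℝ) = N ^ (T + 1) * (c * (N ^ T) ^ k) * N ^ (k + 1) := by
        ring
    _ ≤ _ := by gcongr

theorem div_pow_le_density_pow {F : QuadPoly ι ℤ} {x : ι → ℤ} {i : ι} {g D w : ℤ} {N : ℕ}
    (hN₀ : N ≠ 0) (hN : (N : ℤ) = g ^ 2 * D) (hgD : g ∣ D) (hw : IsCoprime w D)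
    (hx : (N : ℤ) ∣ F.eval x) (hgrad : F.grad x i = g * w) (T : ℕ) :
    N / (N : ℝ) ^ Fintype.card ι ≤ F.density (N ^ (T + 1)) := by
  have : NeZero N := ⟨hN₀⟩
  have : Nonempty ι := ⟨i⟩
  have hcount : (N ^ T) ^ (Fintype.card ι - 1) ≤ (F.mod (N ^ (T + 1))).zeroCount :=
    (pow_le_card_zeros_congr hN hgD hw hx hgrad T).trans
      (Nat.card_mono (Set.toFinite {y | (F.mod (N ^ (T + 1))).eval y = 0}) fun _ hy => hy.1)
  simpa using mul_div_pow_le_density_pow hN₀ (c := 1) (by simpa using hcount)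

/-- The number of zeros of a quadratic polynomial at which some partial derivative is nonzero. -/
noncomputable def nonsingularCount {R : Type*} [CommRing R] (F : QuadPoly ι R) : ℕ :=
  Nat.card {x : ι → R // F.eval x = 0 ∧ F.grad x ≠ 0}

/-- The density of nonsingular zeros over a finite ring, normalized like `QuadPoly.density`. -/
noncomputable def nonsingularDensity {R : Type*} [CommRing R] (F : QuadPoly ι R) : ℝ :=
  Nat.card R * F.nonsingularCount / (Nat.card R : ℝ) ^ Fintype.card ι

theorem pow_le_card_zeros_lifting (F : QuadPoly ι ℤ) (p : ℕ) [Fact p.Prime] (T : ℕ)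
    {x : ι → ZMod p} (hx : (F.mod p).eval x = 0) (hgrad : (F.mod p).grad x ≠ 0) :
    (p ^ T) ^ (Fintype.card ι - 1) ≤ Nat.card {y : ι → ZMod (p ^ (T + 1)) //
      (F.mod (p ^ (T + 1))).eval y = 0 ∧
        ZMod.castHom (dvd_pow_self p T.succ_ne_zero) (ZMod p) ∘ y = x} := by
  have hp : p.Prime := Fact.out
  obtain ⟨i, hi⟩ := Function.ne_iff.mp hgrad
  obtain ⟨x, rfl⟩ := (ZMod.intCast_surjective (n := p)).comp_left x
  have hgrad' : (F.mod p).grad (Int.cast ∘ x) i = (F.grad x i : ℤ) :=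
    congrFun (F.grad_map (Int.castRingHom (ZMod p)) x) i
  have hcop : IsCoprime (F.grad x i) (p : ℤ) := by
    rw [isCoprime_comm, (Nat.prime_iff_prime_int.mp hp).coprime_iff_not_dvd,
      ← ZMod.intCast_zmod_eq_zero_iff_dvd, ← hgrad']
    exact hi
  have hzero : (p : ℤ) ∣ F.eval x := by
    rw [← ZMod.intCast_zmod_eq_zero_iff_dvd, ← eval_mod]
    exact hx
  refine (pow_le_card_zeros_congr (g := 1) (by ring) (one_dvd _) hcop hzero (by ring) T).trans
    (Nat.card_mono (Set.toFinite _) fun y hy => ⟨hy.1, funext fun j => ?_⟩)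
  obtain ⟨t, ht⟩ := hy.2 j
  rw [Function.comp_apply, ht, map_intCast]
  simp

theorem nonsingularCount_mul_pow_le_zeroCount (F : QuadPoly ι ℤ) (p : ℕ) [Fact p.Prime] (T : ℕ) :
    (F.mod p).nonsingularCount * (p ^ T) ^ (Fintype.card ι - 1) ≤
      (F.mod (p ^ (T + 1))).zeroCount := by
  classical
  let reduce (y : ι → ZMod (p ^ (T + 1))) : ι → ZMod p :=
    ZMod.castHom (dvd_pow_self p T.succ_ne_zero) (ZMod p) ∘ y
  let zeros : Finset (ι → ZMod (p ^ (T + 1))) := {y | (F.mod (p ^ (T + 1))).eval y = 0}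
  let nonsingularZeros : Finset (ι → ZMod p) := {x | (F.mod p).eval x = 0 ∧ (F.mod p).grad x ≠ 0}
  have hfiber : ∀ x ∈ nonsingularZeros,
      (p ^ T) ^ (Fintype.card ι - 1) ≤ #{y ∈ zeros | reduce y = x} := fun x hx => by
    obtain ⟨hx, hgrad⟩ := (mem_filter.mp hx).2
    refine (F.pow_le_card_zeros_lifting p T hx hgrad).trans_eq ?_
    rw [Nat.card_eq_fintype_card, Fintype.card_subtype, filter_filter]
  rw [nonsingularCount, zeroCount, Nat.card_eq_fintype_card, Fintype.card_subtype,
    Nat.card_eq_fintype_card, Fintype.card_subtype]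
  calc #nonsingularZeros * (p ^ T) ^ (Fintype.card ι - 1)
      ≤ ∑ x ∈ nonsingularZeros, #{y ∈ zeros | reduce y = x} := by
        simpa using card_nsmul_le_sum _ _ _ hfiber
    _ ≤ #zeros := (sum_card_fiberwise_eq_card_filter _ _ _).trans_le (card_filter_le _ _)

theorem nonsingularDensity_le_density_pow [Nonempty ι] (F : QuadPoly ι ℤ) (p : ℕ) [Fact p.Prime]
    (T : ℕ) : (F.mod p).nonsingularDensity ≤ F.density (p ^ (T + 1)) := by
  rw [nonsingularDensity, Nat.card_zmod]
  exact mul_div_pow_le_density_pow (NeZero.ne p) (F.nonsingularCount_mul_pow_le_zeroCount p T)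

end QuadPoly

end HenselLifting

section Rank

theorem exists_intCast_eq_smul_matrix {ι κ : Type*} [Finite ι] [Finite κ] (M : Matrix ι κ ℚ) :
    ∃ d : ℤ, d ≠ 0 ∧ ∃ M' : Matrix ι κ ℤ, M'.map ((↑) : ℤ → ℚ) = (d : ℚ) • M := by
  obtain ⟨d, hd⟩ := IsLocalization.exist_integer_multiples_of_finite (nonZeroDivisors ℤ)
    fun p : ι × κ => M p.1 p.2
  choose M' hM' using hd
  refine ⟨d, nonZeroDivisors.ne_zero d.2, Matrix.of fun i s => M' (i, s), ?_⟩
  ext i s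
  simpa using hM' (i, s)

variable {ι κ K : Type*} [Fintype ι] [Fintype κ] [DecidableEq κ] [Field K] {B B' : Matrix ι ι K}

theorem matrix_rank_add_le (A B : Matrix ι ι K) : (A + B).rank ≤ A.rank + B.rank := by
  have hle : LinearMap.range (A + B).mulVecLin ≤
      LinearMap.range A.mulVecLin ⊔ LinearMap.range B.mulVecLin := by
    rw [mulVecLin_add]
    exact LinearMap.range_add_le _ _
  exact (Submodule.finrank_mono hle).trans (Submodule.finrank_add_le_finrank_add_finrank _ _)

theorem ScalarFactorsThrough.card_le_rank {Δ : K} (h : ScalarFactorsThrough κ Δ B) (hΔ : Δ ≠ 0) :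
    Fintype.card κ ≤ B.rank := by
  obtain ⟨P, X, hPX⟩ := h
  calc Fintype.card κ = (Δ • (1 : Matrix κ κ K)).rank := by
        rw [rank_smul_of_mem_nonZeroDivisors _ (mem_nonZeroDivisors_of_ne_zero hΔ), rank_one]
    _ ≤ B.rank := hPX ▸ (rank_mul_le_left _ _).trans (rank_mul_le_right _ _)

theorem scalarFactorsThrough_one_of_card_le_rank (h : Fintype.card κ ≤ B.rank) :
    ScalarFactorsThrough κ 1 B := by
  obtain ⟨v, hv⟩ := exists_linearIndependent_of_le_finrank h
  choose x hx using fun s => (v s).2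
  let e := Fintype.equivFin κ
  let X : Matrix ι κ K := (Matrix.of fun s => x (e s))ᵀ
  have hcol : (B * X).col = fun s => (v (e s) : ι → K) := funext fun s => hx (e s)
  have hinj : Function.Injective (B * X).mulVecLin := mulVec_injective_iff.mpr <| by
    rw [hcol]
    exact (hv.comp e e.injective).map' (Submodule.subtype _) (Submodule.ker_subtype _)
  classical
  obtain ⟨P, hP⟩ := LinearMap.exists_leftInverse_of_injective _ (LinearMap.ker_eq_bot.mpr hinj)
  refine ⟨LinearMap.toMatrix' P, X, ?_⟩
  rw [Matrix.mul_assoc, one_smul, ← LinearMap.toMatrix'_id, ← hP, LinearMap.toMatrix'_comp,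
    ← toLin'_apply', LinearMap.toMatrix'_toLin']

theorem exists_scalarFactorsThrough_of_card_le_rank {B : Matrix ι ι ℤ}
    (h : Fintype.card κ ≤ (B.map ((↑) : ℤ → ℚ)).rank) : ∃ d ≠ 0, ScalarFactorsThrough κ d B := by
  obtain ⟨P, X, hPX⟩ := scalarFactorsThrough_one_of_card_le_rank h
  obtain ⟨d, hd, P', hP'⟩ := exists_intCast_eq_smul_matrix P
  obtain ⟨d', hd', X', hX'⟩ := exists_intCast_eq_smul_matrix X
  refine ⟨d * d', mul_ne_zero hd hd', P', X', map_injective (Int.castRingHom ℚ).injective_int ?_⟩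
  beta_reduce
  rw [Matrix.map_mul, Matrix.map_mul, Matrix.map_smul' _ _ _ (map_mul _),
    Matrix.map_one _ (map_zero _) (map_one _), map_mul, mul_comm]
  simp only [Int.coe_castRingHom, hP', hX', Matrix.smul_mul, Matrix.mul_smul, hPX, one_smul,
    smul_smul]

end Rank

section FiniteField

namespace QuadPoly

variable {ι K : Type*} [Fintype ι] [Field K]

section Isotropic

variable {F : QuadPoly ι K} {e : ι → K}

theorem eval_add_smul_of_isotropic (he : e ⬝ᵥ F.A *ᵥ e = 0) (x : ι → K) (t : K) :
    F.eval (x + t • e) = F.eval x + t * (F.grad x ⬝ᵥ e) := by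
  simp only [eval_add, dotProduct_smul, mulVec_smul, smul_dotProduct, he, smul_eq_mul]
  ring

theorem grad_dotProduct (F : QuadPoly ι K) (x e : ι → K) :
    F.grad x ⬝ᵥ e = F.hessian *ᵥ e ⬝ᵥ x + F.L ⬝ᵥ e := by
  rw [grad, add_dotProduct, dotProduct_comm, dotProduct_mulVec, ← mulVec_transpose, hessian,
    transpose_add, transpose_transpose, add_comm F.Aᵀ]

theorem grad_add_smul_dotProduct_of_isotropic (he : e ⬝ᵥ F.A *ᵥ e = 0) (x : ι → K) (t : K) :
    F.grad (x + t • e) ⬝ᵥ e = F.grad x ⬝ᵥ e := by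
  have hee : F.hessian *ᵥ e ⬝ᵥ e = 0 := by
    rw [hessian, add_mulVec, add_dotProduct, dotProduct_comm, he, mulVec_transpose,
      ← dotProduct_mulVec, he, add_zero]
  rw [grad_dotProduct, grad_dotProduct, dotProduct_add, dotProduct_smul, hee, smul_zero, add_zero]

variable [Finite K]

theorem card_grad_dotProduct_ne_zero_le (he : e ⬝ᵥ F.A *ᵥ e = 0) :
    Nat.card {x // F.grad x ⬝ᵥ e ≠ 0} ≤ F.nonsingularCount * Nat.card K := by
  let s (x : ι → K) : K := -F.eval x / (F.grad x ⬝ᵥ e)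
  rw [nonsingularCount, ← Nat.card_prod]
  refine Nat.card_le_card_of_injective
    (fun x => (⟨x.1 + s x.1 • e, ?_, fun hgrad => x.2 ?_⟩, s x.1)) fun x y hxy => ?_
  · rw [eval_add_smul_of_isotropic he, div_mul_cancel₀ _ x.2, add_neg_cancel]
  · rw [← grad_add_smul_dotProduct_of_isotropic he, hgrad, zero_dotProduct]
  · simp only [Prod.mk.injEq, Subtype.mk.injEq] at hxy
    rw [hxy.2] at hxy
    exact Subtype.ext (add_right_cancel hxy.1)

theorem card_dotProduct_eq_mul_le {v : ι → K} (hv : v ≠ 0) (c : K) :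
    Nat.card {x // v ⬝ᵥ x = c} * Nat.card K ≤ Nat.card K ^ Fintype.card ι := by
  classical
  obtain ⟨i, hi⟩ := Function.ne_iff.mp hv
  rw [← Nat.card_prod, ← Nat.card_eq_fintype_card (α := ι), ← Nat.card_fun]
  refine Nat.card_le_card_of_injective (fun x => x.1.1 + Pi.single i x.2) fun x y hxy => ?_
  have hsnd : x.2 = y.2 := by
    have hdot := congrArg (v ⬝ᵥ ·) hxy
    simp only [dotProduct_add, dotProduct_single, x.1.2, y.1.2] at hdot
    exact mul_left_cancel₀ hi (add_left_cancel hdot)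
  simp only [hsnd] at hxy
  exact Prod.ext (Subtype.ext (add_right_cancel hxy)) hsnd

theorem one_sub_le_nonsingularDensity_of_isotropic (he : e ⬝ᵥ F.A *ᵥ e = 0)
    (he' : F.hessian *ᵥ e ≠ 0) : 1 - 1 / (Nat.card K : ℝ) ≤ F.nonsingularDensity := by
  classical
  have := Fintype.ofFinite K
  have hne := card_grad_dotProduct_ne_zero_le he
  have heq : Nat.card {x // F.grad x ⬝ᵥ e = 0} * Nat.card K ≤ Nat.card K ^ Fintype.card ι := by
    simpa only [grad_dotProduct, add_eq_zero_iff_eq_neg] using card_dotProduct_eq_mul_le he' _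
  have hsum : Nat.card {x // F.grad x ⬝ᵥ e = 0} + Nat.card {x // F.grad x ⬝ᵥ e ≠ 0} =
      Nat.card K ^ Fintype.card ι := by
    rw [← Nat.card_sum, Nat.card_congr (Equiv.sumCompl fun x => F.grad x ⬝ᵥ e = 0), Nat.card_fun,
      Nat.card_eq_fintype_card (α := ι)]
  have : (0 : ℝ) < Nat.card K := by exact_mod_cast Nat.card_pos
  rw [nonsingularDensity, le_div_iff₀ (by positivity), sub_mul, one_mul, div_mul_eq_mul_div,
    one_mul, sub_le_iff_le_add]
  rify at hne heq hsum
  rw [← hsum] at heq ⊢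
  have := (le_div_iff₀ this).mpr heq
  linarith

end Isotropic

theorem exists_isotropic [Finite K] {κ : Type*} [Fintype κ] [DecidableEq κ]
    {F : QuadPoly ι K} {Δ : K} (hΔ : Δ ≠ 0) (hκ : 2 < Fintype.card κ)
    (h : ScalarFactorsThrough κ Δ F.hessian) :
    ∃ e, e ⬝ᵥ F.A *ᵥ e = 0 ∧ F.hessian *ᵥ e ≠ 0 := by
  classical
  have := Fintype.ofFinite K
  obtain ⟨P, Y, hPY⟩ := h
  let f : MvPolynomial κ K := ∑ s, ∑ t, C ((Yᵀ * F.A * Y) s t) * X s * X t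
  have hf (x) : MvPolynomial.eval x f = (Y *ᵥ x) ⬝ᵥ F.A *ᵥ Y *ᵥ x := by
    have hx : MvPolynomial.eval x f = x ⬝ᵥ (Yᵀ * F.A * Y) *ᵥ x := by
      simp only [f, map_sum, map_mul, MvPolynomial.eval_C, MvPolynomial.eval_X, dotProduct,
        mulVec, Finset.mul_sum]
      exact Finset.sum_congr rfl fun s _ => Finset.sum_congr rfl fun t _ => by ring
    rw [hx, ← mulVec_mulVec, ← mulVec_mulVec, dotProduct_mulVec, vecMul_transpose]
  have hf0 : MvPolynomial.eval 0 f = 0 := by rw [hf, mulVec_zero, zero_dotProduct]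
  have hdeg : f.totalDegree < Fintype.card κ := by
    refine (totalDegree_finsetSum_le fun s _ => totalDegree_finsetSum_le fun t _ => ?_).trans_lt hκ
    refine (totalDegree_mul _ _).trans (?_ : _ ≤ 1 + 1)
    exact add_le_add ((totalDegree_mul _ _).trans (by simp)) (totalDegree_X _).le
  obtain ⟨p, hp⟩ := CharP.exists K
  have hone : 1 < Fintype.card {x // MvPolynomial.eval x f = 0} :=
    (CharP.char_is_prime K p).one_lt.trans_le (Nat.le_of_dvd
      (Fintype.card_pos_iff.mpr ⟨0, hf0⟩) (char_dvd_card_solutions p hdeg))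
  obtain ⟨⟨x, hx⟩, hx0⟩ := Fintype.exists_ne_of_one_lt_card hone ⟨0, hf0⟩
  refine ⟨Y *ᵥ x, (hf x).symm.trans hx, fun hker => hx0 (Subtype.ext ?_)⟩
  have : Δ • x = 0 := by
    rw [← one_mulVec x, ← smul_mulVec, ← hPY, ← mulVec_mulVec, ← mulVec_mulVec, hker, mulVec_zero]
  exact (smul_eq_zero.mp this).resolve_left hΔ

section Generic

variable {κ : Type*} [Fintype κ] [DecidableEq κ] {p : ℕ} [Fact p.Prime] {F : QuadPoly ι ℤ} {Δ : ℤ}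

theorem one_sub_le_density_prime (hΔ : (Δ : ZMod p) ≠ 0)
    (h : ScalarFactorsThrough κ (Δ : ZMod p) (F.mod p).hessian) :
    1 - p * √((1 / p) ^ Fintype.card κ) ≤ F.density p := by
  classical
  have hbound (a : ℕ) (ha : a ∈ (Finset.range p).erase 0) :
      ‖F.gaussAverage p a‖ ≤ √((1 / p) ^ Fintype.card κ) := by
    have hunit : IsUnit (a : ZMod p) := by
      rw [isUnit_iff_ne_zero, Ne, ZMod.natCast_eq_zero_iff]
      obtain ⟨ha0, ha⟩ := Finset.mem_erase.mp ha
      exact Nat.not_dvd_of_pos_of_lt (Nat.pos_of_ne_zero ha0) (Finset.mem_range.mp ha)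
    simpa using F.norm_gaussAverage_le (card_mul_eq_zero_of_isUnit hΔ.isUnit).le h hunit
  have hzero : F.gaussAverage p 0 = 1 := by
    simp [gaussAverage, ZMod.card, (Fact.out : p.Prime).ne_zero]
  have hsum := F.sum_gaussAverage p
  rw [← Finset.add_sum_erase _ _ (Finset.mem_range.mpr (Fact.out : p.Prime).pos), Nat.cast_zero,
    hzero] at hsum
  have hle : ‖∑ a ∈ (Finset.range p).erase 0, F.gaussAverage p a‖ ≤
      p * √((1 / p) ^ Fintype.card κ) := by
    refine (norm_sum_le_of_le _ hbound).trans ?_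
    rw [Finset.sum_const, nsmul_eq_mul]
    gcongr
    simpa using Finset.card_erase_le (s := Finset.range p) (a := 0)
  rw [eq_sub_of_add_eq' hsum, ← Complex.ofReal_one, ← Complex.ofReal_sub, Complex.norm_real,
    Real.norm_eq_abs] at hle
  linarith [neg_abs_le (F.density p - 1)]

theorem card_grad_eq_zero_le [Finite K] (F : QuadPoly ι K) :
    Nat.card {x // F.grad x = 0} ≤ Nat.card (LinearMap.ker F.hessian.mulVecLin) := by
  obtain h | ⟨⟨x₀, hx₀⟩⟩ := isEmpty_or_nonempty {x // F.grad x = 0}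
  · simp
  refine Nat.card_le_card_of_injective (fun x => ⟨x.1 - x₀, ?_⟩) fun x y hxy =>
    Subtype.ext (sub_left_injective (congrArg Subtype.val hxy))
  rw [LinearMap.mem_ker, mulVecLin_apply, mulVec_sub, sub_eq_zero]
  exact add_right_cancel (x.2.trans hx₀.symm)

theorem zeroCount_le_nonsingularCount_add [Finite K] (F : QuadPoly ι K) :
    F.zeroCount ≤ F.nonsingularCount + Nat.card {x // F.grad x = 0} := by
  refine (Set.ncard_le_ncard fun x hx => ?_).trans
    (Set.ncard_union_le {x | F.eval x = 0 ∧ F.grad x ≠ 0} {x | F.grad x = 0})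
  by_cases hgrad : F.grad x = 0
  exacts [Or.inr hgrad, Or.inl ⟨hx, hgrad⟩]

theorem one_sub_le_nonsingularDensity (hΔ : (Δ : ZMod p) ≠ 0)
    (h : ScalarFactorsThrough κ (Δ : ZMod p) (F.mod p).hessian) :
    1 - (p * √((1 / p) ^ Fintype.card κ) + p * (1 / p) ^ Fintype.card κ) ≤
      (F.mod p).nonsingularDensity := by
  have hp : (0 : ℝ) < p := by exact_mod_cast (Fact.out : p.Prime).pos
  have hker := h.card_ker_mul_le
  rw [card_mul_eq_zero_of_isUnit hΔ.isUnit, one_pow, one_mul, Nat.card_zmod] at hker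
  have hcount := (F.mod p).zeroCount_le_nonsingularCount_add.trans
    (Nat.add_le_add_left (card_grad_eq_zero_le _) _)
  have hdensity := one_sub_le_density_prime hΔ h
  rify at hker hcount
  have hsing : (Nat.card (LinearMap.ker (F.mod p).hessian.mulVecLin) : ℝ) ≤
      (1 / p) ^ Fintype.card κ * p ^ Fintype.card ι := by
    rwa [div_pow, one_pow, div_mul_eq_mul_div, one_mul, le_div_iff₀ (by positivity)]
  rw [density, le_div_iff₀ (by positivity)] at hdensity
  rw [nonsingularDensity, Nat.card_zmod, le_div_iff₀ (by positivity)]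
  have := mul_le_mul_of_nonneg_left (hcount.trans (add_le_add_right hsing _)) hp.le
  linarith

theorem one_sub_two_div_rpow_le_nonsingularDensity (hκ : Fintype.card κ = 5)
    (hΔ : (Δ : ZMod p) ≠ 0) (h : ScalarFactorsThrough κ (Δ : ZMod p) (F.mod p).hessian) :
    1 - 2 / (p : ℝ) ^ (3 / 2 : ℝ) ≤ (F.mod p).nonsingularDensity := by
  have hp : (1 : ℝ) ≤ p := by exact_mod_cast (Fact.out : p.Prime).one_le
  have : (0 : ℝ) < p := by linarith
  have hsqrt : p * √((1 / p) ^ 5) = 1 / (p : ℝ) ^ (3 / 2 : ℝ) := by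
    rw [one_div, inv_pow, Real.sqrt_inv, Real.sqrt_eq_rpow, ← Real.rpow_natCast,
      ← Real.rpow_mul this.le, ← div_eq_mul_inv, div_eq_div_iff (by positivity) (by positivity),
      ← Real.rpow_one_add' this.le (by norm_num)]
    norm_num
  have hpow : p * (1 / p) ^ 5 ≤ 1 / (p : ℝ) ^ (3 / 2 : ℝ) := by
    calc
      _ = 1 / (p : ℝ) ^ (4 : ℝ) := by
        rw [Real.rpow_ofNat]
        field_simp
      _ ≤ _ := by
        gcongr
        norm_num
  have hmain := one_sub_le_nonsingularDensity hΔ h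
  rw [hκ] at hmain
  linarith [mul_one_div 2 ((p : ℝ) ^ (3 / 2 : ℝ))]

end Generic

end QuadPoly

end FiniteField

section Pencil

open Finset

variable {κ R S : Type*} [Fintype κ] [DecidableEq κ] [CommRing R] [CommRing S]

/-- The determinant of the pencil `c + t M`, which decides when a linear combination of two
matrices, the first of which has a scalar matrix factoring through it, inherits this property. -/
def pencilDet (M : Matrix κ κ R) (c t : R) : R := (c • (1 : Matrix κ κ R) + t • M).det

theorem map_pencilDet (f : R →+* S) (M : Matrix κ κ R) (c t : R) :
    f (pencilDet M c t) = pencilDet (M.map f) (f c) (f t) := by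
  rw [pencilDet, RingHom.map_det, map_add, RingHom.mapMatrix_apply, RingHom.mapMatrix_apply,
    Matrix.map_smul' _ _ _ (map_mul f), Matrix.map_smul' _ _ _ (map_mul f),
    Matrix.map_one _ (map_zero f) (map_one f), pencilDet]

theorem ScalarFactorsThrough.exists_pencilDet {ι : Type*} [Fintype ι] {d : R} {B₁ : Matrix ι ι R}
    (h : ScalarFactorsThrough κ d B₁) (B₂ : Matrix ι ι R) : ∃ M : Matrix κ κ R, ∀ y₁ y₂ : R,
      ScalarFactorsThrough κ (pencilDet M (y₁ * d) y₂) (y₁ • B₁ + y₂ • B₂) := by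
  obtain ⟨P, X, hPX⟩ := h
  refine ⟨P * B₂ * X, fun y₁ y₂ => ⟨P, X * ((y₁ * d) • 1 + y₂ • (P * B₂ * X)).adjugate, ?_⟩⟩
  rw [← Matrix.mul_assoc, Matrix.mul_add, Matrix.add_mul, Matrix.mul_smul, Matrix.mul_smul,
    Matrix.smul_mul, Matrix.smul_mul, hPX, smul_smul, mul_adjugate, pencilDet]

theorem card_pencilDet_eq_zero_le [IsDomain R] (M : Matrix κ κ R) {c : R} (hc : c ≠ 0)
    {s : Finset R} (hs : ∀ t ∈ s, pencilDet M c t = 0) : #s ≤ Fintype.card κ := by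
  classical
  let f : Polynomial R := ((Polynomial.X : Polynomial R) • M.map Polynomial.C +
    (c • (1 : Matrix κ κ R)).map Polynomial.C).det
  have heval (t : R) : f.eval t = pencilDet M c t := by
    rw [← Polynomial.coe_evalRingHom, RingHom.map_det, pencilDet, add_comm]
    congr 1
    ext i j
    simpa using mul_comm _ _
  have hf : f ≠ 0 := by
    intro hf
    have h0 := heval 0
    rw [hf, Polynomial.eval_zero, pencilDet, zero_smul, add_zero, det_smul, det_one, mul_one] at h0
    exact pow_ne_zero _ hc h0.symm
  calc #s ≤ #f.roots.toFinset := card_le_card fun t ht => by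
        rw [Multiset.mem_toFinset, Polynomial.mem_roots hf, Polynomial.IsRoot, heval, hs t ht]
    _ ≤ f.roots.card := Multiset.toFinset_card_le _
    _ ≤ f.natDegree := f.card_roots'
    _ ≤ Fintype.card κ := Polynomial.natDegree_det_X_add_C_le _ _

theorem card_filter_range_natCast_eq_le (p : ℕ) [NeZero p] (a : ZMod p) (L : ℕ) :
    #{z ∈ range L | ((z : ℕ) : ZMod p) = a} ≤ L / p + 1 := by
  refine (card_le_card_of_injOn (t := range (L / p + 1)) (· / p) ?_ ?_).trans_eq (card_range _)
  · intro z hz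
    rw [mem_coe, mem_filter, mem_range] at hz
    exact mem_coe.mpr (mem_range.mpr (Nat.lt_succ_of_le (Nat.div_le_div_right hz.1.le)))
  · intro z hz z' hz' hdiv
    rw [mem_coe, mem_filter] at hz hz'
    have hmod := (ZMod.natCast_eq_natCast_iff' _ _ _).mp (hz.2.trans hz'.2.symm)
    rw [← Nat.div_add_mod z p, ← Nat.div_add_mod z' p, hmod]
    congr 2

theorem card_filter_pencilDet_eq_zero_le {p : ℕ} [Fact p.Prime] (M : Matrix κ κ (ZMod p))
    {c β : ZMod p} (hc : c ≠ 0) (hβ : β ≠ 0) (α : ZMod p) (L : ℕ) :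
    #{z ∈ range L | pencilDet M c (α + β * (z : ℕ)) = 0} ≤ (L / p + 1) * Fintype.card κ := by
  let t : ℕ → ZMod p := fun z => α + β * z
  let s := {z ∈ range L | pencilDet M c (t z) = 0}
  have hroots : #(s.image t) ≤ Fintype.card κ := card_pencilDet_eq_zero_le M hc fun y hy => by
    obtain ⟨z, hz, rfl⟩ := mem_image.mp hy
    exact (mem_filter.mp hz).2
  refine (card_le_mul_card_image s (L / p + 1) fun y _ => ?_).trans (Nat.mul_le_mul_left _ hroots)
  refine le_trans (card_le_card fun z hz => ?_)
    (card_filter_range_natCast_eq_le p (β⁻¹ * (y - α)) L)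
  rw [mem_filter] at hz ⊢
  refine ⟨(mem_filter.mp hz.1).1, ?_⟩
  rw [← hz.2, add_sub_cancel_left, inv_mul_cancel_left₀ hβ]

theorem exists_natAbs_pencilDet_le (M : Matrix κ κ ℤ) : ∃ C : ℕ, 0 < C ∧ ∀ (c t : ℤ) (u : ℕ),
    c.natAbs ≤ u → t.natAbs ≤ u → (pencilDet M c t).natAbs ≤ C * u ^ Fintype.card κ := by
  let b : ℕ := ∑ i, ∑ j, (M i j).natAbs
  have hb (i j : κ) : |M i j| ≤ b := by
    rw [Int.abs_eq_natAbs]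
    exact_mod_cast (single_le_sum (f := fun j => (M i j).natAbs) (fun _ _ => Nat.zero_le _)
      (mem_univ j)).trans (single_le_sum (f := fun i => ∑ j, (M i j).natAbs)
        (fun _ _ => Nat.zero_le _) (mem_univ i))
  refine ⟨(Fintype.card κ).factorial * (1 + b) ^ Fintype.card κ, by positivity,
    fun c t u hc ht => ?_⟩
  have hentry (i j : κ) : |(c • (1 : Matrix κ κ ℤ) + t • M) i j| ≤ u * (1 + b) := by
    have hone : |(1 : Matrix κ κ ℤ) i j| ≤ 1 := by
      rw [one_apply]
      split_ifs <;> simp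
    have hc' : |c| ≤ u := by rw [Int.abs_eq_natAbs]; exact_mod_cast hc
    have ht' : |t| ≤ u := by rw [Int.abs_eq_natAbs]; exact_mod_cast ht
    calc |c * (1 : Matrix κ κ ℤ) i j + t * M i j|
        ≤ |c| * |(1 : Matrix κ κ ℤ) i j| + |t| * |M i j| := by
          rw [← abs_mul, ← abs_mul]
          exact abs_add_le _ _
      _ ≤ u * 1 + u * b := by gcongr; exact hb i j
      _ = u * (1 + b) := by ring
  have hdet := Matrix.det_le (abv := AbsoluteValue.abs) hentry
  rw [AbsoluteValue.abs_apply, ← pencilDet, Int.abs_eq_natAbs, nsmul_eq_mul, mul_pow] at hdet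
  rw [mul_assoc, mul_comm (_ ^ _)]
  exact_mod_cast hdet

end Pencil

section Average

open Finset

namespace QuadPoly

variable {ι R S : Type*} [CommRing R] [CommRing S]

/-- Multiplication of all coefficients of a quadratic polynomial by a constant. -/
instance : SMul R (QuadPoly ι R) := ⟨fun c F => ⟨c • F.A, c • F.L, c * F.k⟩⟩

theorem map_smul (f : R →+* S) (c : R) (F : QuadPoly ι R) : (c • F).map f = f c • F.map f := by
  change QuadPoly.mk ((c • F.A).map f) (f ∘ (c • F.L)) (f (c * F.k)) =
    QuadPoly.mk (f c • F.A.map f) (f c • (f ∘ F.L)) (f c * f F.k)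
  congr 1
  · exact Matrix.map_smul' _ _ _ (map_mul f)
  · ext i
    exact map_mul f _ _
  · exact map_mul f _ _

theorem hessian_smul (c : R) (F : QuadPoly ι R) : (c • F).hessian = c • F.hessian :=
  (smul_add c F.A F.Aᵀ).symm

variable [Fintype ι]

theorem eval_smul (c : R) (F : QuadPoly ι R) (x : ι → R) : (c • F).eval x = c * F.eval x := by
  change x ⬝ᵥ (c • F.A) *ᵥ x + (c • F.L) ⬝ᵥ x + c * F.k = c * (x ⬝ᵥ F.A *ᵥ x + F.L ⬝ᵥ x + F.k)
  rw [smul_mulVec, dotProduct_smul, smul_dotProduct, smul_eq_mul, smul_eq_mul, mul_add, mul_add]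

theorem density_le_density_smul (c : ℤ) (F : QuadPoly ι ℤ) (Q : ℕ) [NeZero Q] :
    F.density Q ≤ (c • F).density Q := by
  have hzero (x : ι → ZMod Q) (hx : (F.mod Q).eval x = 0) : ((c • F).mod Q).eval x = 0 := by
    rw [mod, map_smul, eval_smul, ← mod, hx, mul_zero]
  have : (F.mod Q).zeroCount ≤ ((c • F).mod Q).zeroCount :=
    Nat.card_le_card_of_injective _ (Subtype.map_injective hzero Function.injective_id)
  rw [density, density]
  gcongr

theorem mul_one_sub_sum_inv_le_re_singSeries {m : ℕ} {F : QuadPoly (Fin m) ℤ} {E : ℤ} (hE : E ≠ 0)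
    (h : ScalarFactorsThrough (Fin 5) E F.hessian) {N : ℕ} (hN : N ≠ 0) {α ε : ℝ} (hα : 0 ≤ α)
    (hNα : ∀ T, α ≤ F.density (N ^ (T + 1))) (hε : ε ≤ 1)
    (htail : ∀ s : Finset ℕ, (∀ p ∈ s, p.Prime ∧ ¬p ∣ N) → ∑ p ∈ s, 2 / (p : ℝ) ^ (3 / 2 : ℝ) ≤ ε)
    (hbad : ∀ p : ℕ, p.Prime → ¬p ∣ N → (p : ℤ) ∣ E → ∀ T,
      1 - 1 / (p : ℝ) ≤ F.density (p ^ (T + 1))) :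
    α * (1 - (ε + ∑ p ∈ E.natAbs.primeFactors with ¬p ∣ N, 1 / (p : ℝ))) ≤
      (singSeries m ((N : ℤ) • F).eval).re := by
  have hNE : (N : ℤ) * E ≠ 0 := mul_ne_zero (Nat.cast_ne_zero.mpr hN) hE
  have hfactor : ScalarFactorsThrough (Fin 5) (N * E) ((N : ℤ) • F).hessian := by
    rw [hessian_smul]
    exact h.smul N
  let err : ℕ → ℝ := fun p => if (p : ℤ) ∣ E then 1 / p else 2 / (p : ℝ) ^ (3 / 2 : ℝ)
  refine mul_one_sub_le_re_singSeries (err := err) hNE hfactor hN hα (fun T => ?_)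
    (fun p hp hpN => ?_) (fun p hp hpN T => ?_) fun s hs => ?_
  · have : NeZero (N ^ (T + 1)) := ⟨pow_ne_zero _ hN⟩
    exact (hNα T).trans (density_le_density_smul _ _ _)
  · have hone : (1 : ℝ) ≤ p := by exact_mod_cast hp.one_le
    have hp2 : 2 / (p : ℝ) ^ (3 / 2 : ℝ) ≤ ε := by simpa using htail {p} (by simpa using ⟨hp, hpN⟩)
    simp only [err]
    split_ifs
    · exact ⟨by positivity, div_le_one_of_le₀ hone (by positivity)⟩
    · exact ⟨by positivity, hp2.trans hε⟩
  · have : Fact p.Prime := ⟨hp⟩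
    have : NeZero (p ^ (T + 1)) := ⟨pow_ne_zero _ hp.ne_zero⟩
    refine le_trans ?_ (density_le_density_smul _ _ _)
    simp only [err]
    split_ifs with hpE
    · exact hbad p hp hpN hpE T
    · have hΔ : (E : ZMod p) ≠ 0 := by rwa [Ne, ZMod.intCast_zmod_eq_zero_iff_dvd]
      have hp := h.map (Int.castRingHom (ZMod p))
      rw [← hessian_map] at hp
      have : 5 ≤ m := by simpa using (hp.card_le_rank hΔ).trans (rank_le_card_width _)
      have : Nonempty (Fin m) := ⟨⟨0, by lia⟩⟩
      exact (one_sub_two_div_rpow_le_nonsingularDensity (Fintype.card_fin 5) hΔ hp).trans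
        (nonsingularDensity_le_density_pow F p T)
  · rw [sum_ite, add_comm ε]
    refine add_le_add (sum_le_sum_of_subset_of_nonneg (fun p hp => ?_) fun _ _ _ => by positivity)
      (htail _ fun p hp => hs p (mem_filter.mp hp).1)
    obtain ⟨hps, hpE⟩ := mem_filter.mp hp
    exact mem_filter.mpr ⟨Nat.mem_primeFactors.mpr ⟨(hs p hps).1, Int.natCast_dvd.mp hpE,
      Int.natAbs_ne_zero.mpr hE⟩, (hs p hps).2⟩

end QuadPoly

theorem sum_inv_le_one_add_log {s : Finset ℕ} {B : ℕ} (hs : s ⊆ Icc 1 B) :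
    ∑ n ∈ s, 1 / (n : ℝ) ≤ 1 + Real.log B := by
  refine le_trans ?_ (harmonic_le_one_add_log B)
  rw [harmonic_eq_sum_Icc]
  push_cast
  simp only [one_div]
  exact sum_le_sum_of_subset_of_nonneg hs fun _ _ _ => by positivity

theorem sum_ite_dvd_inv_le {f : ℕ → ℤ} {p L C : ℕ}
    (hf : #{z ∈ range L | (p : ℤ) ∣ f z} ≤ (L / p + 1) * C) (s : Finset ℕ) (hs : s ⊆ range L) :
    ∑ z ∈ s, (if (p : ℤ) ∣ f z then 1 / (p : ℝ) else 0) ≤ L * (C / (p : ℝ) ^ 2) + C * (1 / p) :=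
  calc
    _ ≤ ∑ z ∈ range L, if (p : ℤ) ∣ f z then 1 / (p : ℝ) else 0 :=
      sum_le_sum_of_subset_of_nonneg hs fun _ _ _ => by positivity
    _ = #{z ∈ range L | (p : ℤ) ∣ f z} * (1 / (p : ℝ)) := by
      rw [← sum_filter, sum_const, nsmul_eq_mul]
    _ ≤ ((L / p + 1) * C) * (1 / p) := by
      gcongr
      rify at hf
      exact hf.trans (by gcongr; exact Nat.cast_div_le)
    _ = _ := by
      ring

theorem sum_sum_inv_primeFactors_le {f : ℕ → ℤ} {r : ℕ → Prop} [DecidablePred r] {L B C : ℕ} {ε : ℝ}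
    (hB : ∀ z < L, (f z).natAbs ≤ B)
    (hf : ∀ p : ℕ, p.Prime → r p → #{z ∈ range L | (p : ℤ) ∣ f z} ≤ (L / p + 1) * C)
    (htail : ∀ s : Finset ℕ, (∀ p ∈ s, p.Prime ∧ r p) → ∑ p ∈ s, C / (p : ℝ) ^ 2 ≤ ε) :
    ∑ z ∈ range L with f z ≠ 0, ∑ p ∈ (f z).natAbs.primeFactors with r p, 1 / (p : ℝ) ≤
      ε * L + C * (1 + Real.log B) := by
  let s : Finset ℕ := {p ∈ Icc 1 B | p.Prime ∧ r p}
  have hs : ∀ p ∈ s, p.Prime ∧ r p := fun p hp => (mem_filter.mp hp).2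
  have hinner (z : ℕ) (hz : z ∈ {z ∈ range L | f z ≠ 0}) :
      ∑ p ∈ (f z).natAbs.primeFactors with r p, 1 / (p : ℝ) ≤
        ∑ p ∈ s with ((p : ℕ) : ℤ) ∣ f z, 1 / (p : ℝ) := by
    rw [mem_filter, mem_range] at hz
    refine sum_le_sum_of_subset_of_nonneg (fun p hp => ?_) fun _ _ _ => by positivity
    obtain ⟨hp, hrp⟩ := mem_filter.mp hp
    obtain ⟨hprime, hdvd, hne⟩ := Nat.mem_primeFactors.mp hp
    have hpB : p ≤ B := (Nat.le_of_dvd (Nat.pos_of_ne_zero hne) hdvd).trans (hB z hz.1)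
    exact mem_filter.mpr ⟨mem_filter.mpr ⟨mem_Icc.mpr ⟨hprime.one_le, hpB⟩, hprime, hrp⟩,
      Int.natCast_dvd.mpr hdvd⟩
  calc
    _ ≤ ∑ z ∈ range L with f z ≠ 0, ∑ p ∈ s, if (p : ℤ) ∣ f z then 1 / (p : ℝ) else 0 := by
      simpa only [sum_filter] using sum_le_sum hinner
    _ ≤ ∑ p ∈ s, (L * (C / (p : ℝ) ^ 2) + C * (1 / p)) := by
      rw [sum_comm]
      exact sum_le_sum fun p hp =>
        sum_ite_dvd_inv_le (hf p (hs p hp).1 (hs p hp).2) _ (filter_subset _ _)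
    _ = L * ∑ p ∈ s, C / (p : ℝ) ^ 2 + C * ∑ p ∈ s, 1 / (p : ℝ) := by
      rw [sum_add_distrib, mul_sum, mul_sum]
    _ ≤ L * ε + C * (1 + Real.log B) := by
      gcongr
      · exact htail s hs
      · exact sum_inv_le_one_add_log (filter_subset _ _)
    _ = _ := by rw [mul_comm]

end Average

section AveragePencil

open Finset

theorem exists_forall_sum_primes_not_dvd_le {f : ℕ → ℝ} (hf : Summable f) {ε : ℝ} (hε : 0 < ε) :
    ∃ P : ℕ, P ≠ 0 ∧ ∀ N, P ∣ N → ∀ s : Finset ℕ, (∀ p ∈ s, p.Prime ∧ ¬p ∣ N) →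
      ∑ p ∈ s, f p ≤ ε := by
  obtain ⟨s₀, hs₀⟩ := summable_iff_vanishing_norm.mp hf ε hε
  refine ⟨∏ p ∈ s₀.erase 0, p, prod_ne_zero_iff.mpr fun p hp => ne_of_mem_erase hp,
    fun N hN s hs => (Real.le_norm_self _).trans (hs₀ s ?_).le⟩
  refine disjoint_left.mpr fun p hp hp₀ => (hs p hp).2 (dvd_trans ?_ hN)
  exact dvd_prod_of_mem _ (mem_erase.mpr ⟨(hs p hp).1.ne_zero, hp₀⟩)

theorem eventually_add_mul_log_le (a b : ℝ) {D : ℕ} (hD : D ≠ 0) (k : ℕ) {ε : ℝ} (hε : 0 < ε) :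
    ∀ᶠ L : ℕ in Filter.atTop, a + b * Real.log (D * (L + 1) ^ k) ≤ ε * L := by
  have hlittle : (fun x : ℝ => a + b * Real.log D + b * k * Real.log x) =o[Filter.atTop] id :=
    (Asymptotics.isLittleO_const_id_atTop _).add (Real.isLittleO_log_id_atTop.const_mul_left _)
  have hsucc : Filter.Tendsto (fun L : ℕ => (L : ℝ) + 1) Filter.atTop Filter.atTop :=
    Filter.tendsto_atTop_add_const_right _ _ tendsto_natCast_atTop_atTop
  filter_upwards [hsucc.eventually (hlittle.bound (half_pos hε)), Filter.eventually_ge_atTop 1]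
    with L hL hL₁
  have : (1 : ℝ) ≤ L := by exact_mod_cast hL₁
  rw [Real.log_mul (by exact_mod_cast hD) (by positivity), Real.log_pow]
  rw [id, Real.norm_of_nonneg (by positivity : (0 : ℝ) ≤ L + 1)] at hL
  nlinarith [Real.le_norm_self (a + b * Real.log D + b * k * Real.log (L + 1))]

theorem le_card_filter_pencilDet_ne_zero_add (M : Matrix (Fin 5) (Fin 5) ℤ) {c β : ℤ} (hc : c ≠ 0)
    (hβ : β ≠ 0) (α : ℤ) (L : ℕ) :
    L ≤ #{z ∈ range L | pencilDet M c (α + β * (z : ℕ)) ≠ 0} + 5 := by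
  let t : ℕ → ℤ := fun z => α + β * z
  have ht : Function.Injective t := fun z z' hz => by simpa [t, hβ] using hz
  have hroots : #{z ∈ range L | pencilDet M c (t z) = 0} ≤ 5 := by
    rw [← card_image_of_injective _ ht]
    refine card_pencilDet_eq_zero_le M hc fun y hy => ?_
    obtain ⟨z, hz, rfl⟩ := mem_image.mp hy
    exact (mem_filter.mp hz).2
  have hcard := card_filter_add_card_filter_not (s := range L) fun z => pencilDet M c (t z) = 0
  rw [card_range] at hcard
  change L ≤ #{z ∈ range L | pencilDet M c (t z) ≠ 0} + 5
  lia

theorem card_filter_dvd_pencilDet_le {M : Matrix (Fin 5) (Fin 5) ℤ} {c : ℤ}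
    {p N : ℕ} (hp : p.Prime) (hpc : ¬(p : ℤ) ∣ c) (hpN : ¬p ∣ N) (α : ℤ) (L : ℕ) :
    #{z ∈ range L | (p : ℤ) ∣ pencilDet M c (α + N * (z : ℕ))} ≤ (L / p + 1) * 5 := by
  have : Fact p.Prime := ⟨hp⟩
  have hcp : (c : ZMod p) ≠ 0 := by rwa [Ne, ZMod.intCast_zmod_eq_zero_iff_dvd]
  have hNp : (N : ZMod p) ≠ 0 := by rwa [Ne, ZMod.natCast_eq_zero_iff]
  refine le_of_eq_of_le (congrArg card (filter_congr fun z _ => ?_))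
    (card_filter_pencilDet_eq_zero_le (M.map (Int.castRingHom (ZMod p))) hcp hNp α L)
  rw [← ZMod.intCast_zmod_eq_zero_iff_dvd, ← eq_intCast (Int.castRingHom (ZMod p)), map_pencilDet]
  simp

theorem sum_filter_inv_le_inv_add (s : Finset ℕ) (r : ℕ → Prop) [DecidablePred r] (l : ℕ) :
    ∑ p ∈ s with r p, 1 / (p : ℝ) ≤ 1 / l + ∑ p ∈ s with r p ∧ p ≠ l, 1 / (p : ℝ) := by
  classical
  rw [← filter_filter, filter_ne', ← sum_insert (f := fun p : ℕ => 1 / (p : ℝ)) (notMem_erase _ _)]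
  exact sum_le_sum_of_subset_of_nonneg (insert_erase_subset _ _) fun _ _ _ => by positivity

namespace QuadPoly

variable {m : ℕ} {F : ℕ → QuadPoly (Fin m) ℤ} {M : Matrix (Fin 5) (Fin 5) ℤ} {c α : ℤ}
  {N l L B : ℕ} {δ : ℝ}

theorem sum_sum_inv_primeFactors_pencilDet_le (hl : 8 ≤ l)
    (hc : ∀ p : ℕ, p.Prime → ¬p ∣ N → p ≠ l → ¬(p : ℤ) ∣ c)
    (htail : ∀ s : Finset ℕ, (∀ p ∈ s, p.Prime ∧ ¬p ∣ N) →
      ∑ p ∈ s, 5 / (p : ℝ) ^ (3 / 2 : ℝ) ≤ 1 / 8)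
    (hB : ∀ z < L, (pencilDet M c (α + N * z)).natAbs ≤ B) :
    ∑ z ∈ range L with pencilDet M c (α + N * (z : ℕ)) ≠ 0,
      ∑ p ∈ (pencilDet M c (α + N * (z : ℕ))).natAbs.primeFactors with ¬p ∣ N, 1 / (p : ℝ) ≤
        L / 4 + 5 * (1 + Real.log B) := by
  let E : ℕ → ℤ := fun z => pencilDet M c (α + N * z)
  have hsq (s : Finset ℕ) (hs : ∀ p ∈ s, p.Prime ∧ ¬p ∣ N ∧ p ≠ l) :
      ∑ p ∈ s, ((5 : ℕ) : ℝ) / (p : ℝ) ^ 2 ≤ 1 / 8 := by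
    refine (sum_le_sum fun p hp => ?_).trans (htail s fun p hp => ⟨(hs p hp).1, (hs p hp).2.1⟩)
    have : (1 : ℝ) ≤ p := by exact_mod_cast (hs p hp).1.one_le
    rw [← Real.rpow_natCast]
    gcongr <;> norm_num
  have hl' : (1 : ℝ) / l ≤ 1 / 8 := by
    gcongr
    exact_mod_cast hl
  calc _ ≤ _ := sum_le_sum fun z _ =>
        (sum_filter_inv_le_inv_add _ _ l).trans (add_le_add_left hl' _)
    _ = #{z ∈ range L | E z ≠ 0} * (1 / 8 : ℝ) + _ := by
      rw [sum_add_distrib, sum_const, nsmul_eq_mul]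
    _ ≤ L * (1 / 8) + (1 / 8 * L + (5 : ℕ) * (1 + Real.log B)) := by
      gcongr
      · simpa using card_filter_le (range L) fun z => E z ≠ 0
      · exact sum_sum_inv_primeFactors_le hB (fun p hp hpN =>
          card_filter_dvd_pencilDet_le hp (hc p hp hpN.1 hpN.2) hpN.1 _ _) hsq
    _ = _ := by
      push_cast
      ring

theorem mul_le_sum_re_singSeries (hN : N ≠ 0) (hl : 8 ≤ l) (hc₀ : c ≠ 0)
    (hc : ∀ p : ℕ, p.Prime → ¬p ∣ N → p ≠ l → ¬(p : ℤ) ∣ c)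
    (htail : ∀ s : Finset ℕ, (∀ p ∈ s, p.Prime ∧ ¬p ∣ N) →
      ∑ p ∈ s, 5 / (p : ℝ) ^ (3 / 2 : ℝ) ≤ 1 / 8)
    (hB : ∀ z < L, (pencilDet M c (α + N * z)).natAbs ≤ B)
    (hLB : 10 + 5 * Real.log B ≤ 3 / 8 * L)
    (h : ∀ z, ScalarFactorsThrough (Fin 5) (pencilDet M c (α + N * (z : ℕ))) (F z).hessian)
    (hδ : 0 ≤ δ) (hNδ : ∀ z T, δ ≤ (F z).density (N ^ (T + 1)))
    (hbad : ∀ z < L, ∀ p : ℕ, p.Prime → ¬p ∣ N → ∀ T,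
      1 - 1 / (p : ℝ) ≤ (F z).density (p ^ (T + 1))) :
    δ / 4 * L ≤ ∑ z ∈ range L with pencilDet M c (α + N * (z : ℕ)) ≠ 0,
      (singSeries m ((N : ℤ) • F z).eval).re := by
  let E : ℕ → ℤ := fun z => pencilDet M c (α + N * z)
  let Z : Finset ℕ := {z ∈ range L | E z ≠ 0}
  have htail' (s : Finset ℕ) (hs : ∀ p ∈ s, p.Prime ∧ ¬p ∣ N) :
      ∑ p ∈ s, 2 / (p : ℝ) ^ (3 / 2 : ℝ) ≤ 1 / 8 := by
    refine (sum_le_sum fun p _ => ?_).trans (htail s hs)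
    gcongr
    norm_num
  have hfiber (z : ℕ) (hz : z ∈ Z) :
      δ * (1 - (1 / 8 + ∑ p ∈ (E z).natAbs.primeFactors with ¬p ∣ N, 1 / (p : ℝ))) ≤
        (singSeries m ((N : ℤ) • F z).eval).re := by
    obtain ⟨hzL, hEz⟩ := mem_filter.mp hz
    exact mul_one_sub_sum_inv_le_re_singSeries hEz (h z) hN hδ (hNδ z) (by norm_num) htail'
      fun p hp hpN _ => hbad z (mem_range.mp hzL) p hp hpN
  have hZ : (L : ℝ) ≤ #Z + 5 := by
    exact_mod_cast le_card_filter_pencilDet_ne_zero_add M hc₀ (Nat.cast_ne_zero.mpr hN) α L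
  have hsum := sum_sum_inv_primeFactors_pencilDet_le hl hc htail hB
  calc δ / 4 * L ≤ δ * (#Z * (7 / 8) - (L / 4 + 5 * (1 + Real.log B))) := by
        rw [div_mul_eq_mul_div, mul_div_assoc]
        gcongr
        linarith
    _ ≤ δ * (#Z * (7 / 8) -
          ∑ z ∈ Z, ∑ p ∈ (E z).natAbs.primeFactors with ¬p ∣ N, 1 / (p : ℝ)) := by
      gcongr
    _ = ∑ z ∈ Z, δ * (1 - (1 / 8 + ∑ p ∈ (E z).natAbs.primeFactors with ¬p ∣ N, 1 / (p : ℝ))) := by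
      rw [← mul_sum, sum_sub_distrib, sum_add_distrib, sum_const, sum_const, nsmul_eq_mul,
        nsmul_eq_mul]
      ring
    _ ≤ _ := sum_le_sum hfiber

end QuadPoly

end AveragePencil

section BinaryForm

variable {ι R S K : Type*} [DecidableEq ι] [CommRing R] [CommRing S] [Field K]

/-- The matrix of the binary quadratic form `a x_i ^ 2 + b x_i x_j + c x_j ^ 2`, seen as a form in
the variables indexed by `ι`; it is upper triangular in the order `i, j`. -/
def binaryForm (i j : ι) (a b c : R) : Matrix ι ι R :=
  Matrix.single i i a + Matrix.single i j b + Matrix.single j j c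

theorem map_binaryForm (f : R →+* S) (i j : ι) (a b c : R) :
    (binaryForm i j a b c).map f = binaryForm i j (f a) (f b) (f c) := by
  simp only [binaryForm, Matrix.map_add _ (map_add f), Matrix.map_single]

theorem binaryForm_add_transpose_row_eq_zero {i j k : ι} (hk : k ∉ ({i, j} : Finset ι))
    (a b c : R) : (binaryForm i j a b c + (binaryForm i j a b c)ᵀ) k = 0 := by
  rw [Finset.mem_insert, Finset.mem_singleton, not_or] at hk
  ext k'
  simp [binaryForm, Ne.symm hk.1, Ne.symm hk.2]

variable [Fintype ι]

theorem dotProduct_binaryForm_mulVec (i j : ι) (a b c : R) (x : ι → R) :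
    x ⬝ᵥ binaryForm i j a b c *ᵥ x = a * x i ^ 2 + b * x i * x j + c * x j ^ 2 := by
  simp only [binaryForm, add_mulVec, single_mulVec_eq, dotProduct_add, dotProduct_smul,
    dotProduct_single, smul_eq_mul]
  ring

theorem binaryForm_add_transpose_mulVec (i j : ι) (a b c : R) (x : ι → R) :
    (binaryForm i j a b c + (binaryForm i j a b c)ᵀ) *ᵥ x =
      Pi.single i (2 * a * x i + b * x j) + Pi.single j (b * x i + 2 * c * x j) := by
  ext k
  simp only [binaryForm, transpose_add, transpose_single, add_mulVec, single_mulVec_eq,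
    Pi.add_apply, Pi.smul_apply, Pi.single_apply, smul_eq_mul]
  split_ifs <;> ring

theorem exists_dotProduct_binaryForm_mulVec_ne_zero {i j : ι} (hij : i ≠ j) {a b c : R}
    (h : b ^ 2 - 4 * a * c ≠ 0) : ∃ x, x ⬝ᵥ binaryForm i j a b c *ᵥ x ≠ 0 := by
  simp only [dotProduct_binaryForm_mulVec]
  by_contra! hx
  have hi : a = 0 := by simpa [hij] using hx (Pi.single i 1)
  have hj : c = 0 := by simpa [hij.symm] using hx (Pi.single j 1)
  have hb : b = 0 := by simpa [hi, hj] using hx 1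
  simp [hi, hb] at h

theorem exists_isotropic_binaryForm {i j : ι} (hij : i ≠ j) {a b c : K} (h2 : (2 : K) ≠ 0)
    (hdisc : b ^ 2 - 4 * a * c ≠ 0) (hsq : IsSquare (b ^ 2 - 4 * a * c)) :
    ∃ e, e ⬝ᵥ binaryForm i j a b c *ᵥ e = 0 ∧
      (binaryForm i j a b c + (binaryForm i j a b c)ᵀ) *ᵥ e ≠ 0 := by
  simp only [dotProduct_binaryForm_mulVec, binaryForm_add_transpose_mulVec]
  obtain rfl | ha := eq_or_ne a 0
  · have hb : b ≠ 0 := by rintro rfl; simp at hdisc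
    exact ⟨Pi.single i 1, by simp [hij], Function.ne_iff.mpr ⟨j, by simp [hij.symm, hb]⟩⟩
  · obtain ⟨s, hs⟩ := hsq
    have hs₀ : s ≠ 0 := by rintro rfl; simp [hs] at hdisc
    refine ⟨Pi.single i (s - b) + Pi.single j (2 * a), ?_, Function.ne_iff.mpr ⟨i, ?_⟩⟩
    · simp only [Pi.add_apply, Pi.single_eq_same, Pi.single_eq_of_ne hij,
        Pi.single_eq_of_ne hij.symm]
      linear_combination -a * hs
    · have : 2 * a * (s - b) + b * (2 * a) = 2 * a * s := by ring
      simp [hij, hij.symm, this, h2, ha, hs₀]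

omit [DecidableEq ι] in
theorem rank_le_card_of_row_eq_zero {B : Matrix ι ι K} {s : Finset ι} (h : ∀ i ∉ s, B i = 0) :
    B.rank ≤ s.card := by
  classical
  have hB : diagonal (fun i => if i ∈ s then (1 : K) else 0) * B = B := by
    ext i j
    rw [diagonal_mul]
    split_ifs with hi
    · rw [one_mul]
    · rw [h i hi, zero_mul, Pi.zero_apply]
  rw [← hB]
  refine (rank_mul_le_left _ _).trans_eq ?_
  simp [rank_diagonal]

end BinaryForm

section BadPrimes

variable {ι : Type*} [Fintype ι]

theorem isSquare_intCast_zmod_of_mod_eq_one {D : ℤ} {p : ℕ} [Fact p.Prime]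
    (h : p % (4 * D.natAbs) = 1) : IsSquare (D : ZMod p) := by
  have hodd : Odd p := ⟨2 * D.natAbs * (p / (4 * D.natAbs)), by
    linarith [Nat.div_add_mod p (4 * D.natAbs)]⟩
  refine ZMod.isSquare_of_jacobiSym_eq_one ?_
  rw [jacobiSym.mod_right D hodd, h, jacobiSym.one_right]

namespace QuadPoly

theorem one_sub_le_nonsingularDensity_of_three_le_rank {K : Type*} [Field K] [Finite K]
    {F : QuadPoly ι K} (h : 3 ≤ F.hessian.rank) :
    1 - 1 / (Nat.card K : ℝ) ≤ F.nonsingularDensity := by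
  rw [← Fintype.card_fin 3] at h
  obtain ⟨e, he, he'⟩ := exists_isotropic one_ne_zero (by simp)
    (scalarFactorsThrough_one_of_card_le_rank h)
  exact one_sub_le_nonsingularDensity_of_isotropic he he'

variable [DecidableEq ι] {A₁ : Matrix ι ι ℤ} {i j : ι} {a b c y₁ y₂ d : ℤ} {p : ℕ} [Fact p.Prime]
  {F : QuadPoly ι ℤ}

omit [Fintype ι] in
theorem mod_A_eq_smul_add_smul_binaryForm (hF : F.A = y₁ • A₁ + y₂ • binaryForm i j a b c) :
    (F.mod p).A = (y₁ : ZMod p) • A₁.map (Int.castRingHom (ZMod p)) +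
      (y₂ : ZMod p) • binaryForm i j (a : ZMod p) b c := by
  have hmap := map_binaryForm (Int.castRingHom (ZMod p)) i j a b c
  simp only [eq_intCast] at hmap
  rw [← hmap, ← eq_intCast (Int.castRingHom (ZMod p)) y₁,
    ← eq_intCast (Int.castRingHom (ZMod p)) y₂, ← Matrix.map_smul' _ _ _ (map_mul _),
    ← Matrix.map_smul' _ _ _ (map_mul _), ← Matrix.map_add _ (map_add _), ← hF]
  rfl

theorem one_sub_le_nonsingularDensity_of_not_dvd
    (hF : F.A = y₁ • A₁ + y₂ • binaryForm i j a b c)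
    (hd : ScalarFactorsThrough (Fin 5) d (A₁ + A₁ᵀ)) (hp : ¬(p : ℤ) ∣ y₁ * d) :
    1 - 1 / (p : ℝ) ≤ (F.mod p).nonsingularDensity := by
  let f := Int.castRingHom (ZMod p)
  let A₂ : Matrix ι ι (ZMod p) := binaryForm i j a b c
  have hd₀ : (y₁ : ZMod p) * f d ≠ 0 := by
    rwa [eq_intCast, ← Int.cast_mul, Ne, ZMod.intCast_zmod_eq_zero_iff_dvd]
  have hhessian : (F.mod p).hessian + -(y₂ : ZMod p) • (A₂ + A₂ᵀ) =
      (y₁ : ZMod p) • (A₁ + A₁ᵀ).map f := by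
    rw [hessian_of_A_eq (mod_A_eq_smul_add_smul_binaryForm hF), Matrix.map_add _ (map_add f),
      transpose_map, neg_smul, add_neg_cancel_right]
  have hrank₁ : 5 ≤ ((y₁ : ZMod p) • (A₁ + A₁ᵀ).map f).rank := by
    simpa using ((hd.map f).smul (y₁ : ZMod p)).card_le_rank hd₀
  have hrank₂ : (-(y₂ : ZMod p) • (A₂ + A₂ᵀ)).rank ≤ 2 := by
    refine (rank_le_card_of_row_eq_zero (s := {i, j}) fun k hk => ?_).trans Finset.card_le_two
    change -(y₂ : ZMod p) • (A₂ + A₂ᵀ) k = 0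
    rw [binaryForm_add_transpose_row_eq_zero hk, smul_zero]
  have := matrix_rank_add_le (F.mod p).hessian (-(y₂ : ZMod p) • (A₂ + A₂ᵀ))
  rw [hhessian] at this
  refine (one_sub_le_nonsingularDensity_of_three_le_rank (by lia)).trans_eq' ?_
  rw [Nat.card_zmod]

theorem one_sub_le_nonsingularDensity_of_dvd (hij : i ≠ j)
    (hF : F.A = y₁ • A₁ + y₂ • binaryForm i j a b c) (hp₁ : (p : ℤ) ∣ y₁) (hp₂ : ¬(p : ℤ) ∣ y₂)
    (hdisc : b ^ 2 - 4 * a * c ≠ 0) (hp : p % (4 * (b ^ 2 - 4 * a * c).natAbs) = 1) :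
    1 - 1 / (p : ℝ) ≤ (F.mod p).nonsingularDensity := by
  have hp₀ : 1 < p := (Fact.out : p.Prime).one_lt
  have hdisc' : ((b ^ 2 - 4 * a * c : ℤ) : ZMod p) ≠ 0 := by
    rw [Ne, ZMod.intCast_zmod_eq_zero_iff_dvd, Int.natCast_dvd]
    intro hdvd
    have := Nat.le_of_dvd (Int.natAbs_pos.mpr hdisc) hdvd
    rw [Nat.mod_eq_of_lt (by lia)] at hp
    lia
  have h2 : (2 : ZMod p) ≠ 0 := by
    rw [← Nat.cast_two, Ne, ZMod.natCast_eq_zero_iff]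
    intro hdvd
    have := Nat.le_of_dvd two_pos hdvd
    rw [Nat.mod_eq_of_lt (by lia)] at hp
    lia
  have hsq := isSquare_intCast_zmod_of_mod_eq_one hp
  push_cast at hdisc' hsq
  obtain ⟨e, he, he'⟩ := exists_isotropic_binaryForm hij h2 hdisc' hsq
  have hA := mod_A_eq_smul_add_smul_binaryForm (p := p) hF
  rw [(ZMod.intCast_zmod_eq_zero_iff_dvd y₁ p).mpr hp₁, zero_smul, zero_add] at hA
  have hy₂ : (y₂ : ZMod p) ≠ 0 := by rwa [Ne, ZMod.intCast_zmod_eq_zero_iff_dvd]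
  refine (one_sub_le_nonsingularDensity_of_isotropic (e := e) ?_ ?_).trans_eq' ?_
  · rw [hA, smul_mulVec, dotProduct_smul, he, smul_zero]
  · rw [hessian, hA, transpose_smul, ← smul_add, smul_mulVec]
    exact smul_ne_zero hy₂ he'
  · rw [Nat.card_zmod]

end QuadPoly

end BadPrimes

section DensityAtModulus

variable {ι R : Type*} [CommRing R]

theorem exists_eval_ne_zero_and_eval_ne_zero [IsDomain R] [Infinite R] {p q : MvPolynomial ι R}
    {u v : ι → R} (hp : eval u p ≠ 0) (hq : eval v q ≠ 0) :
    ∃ x, eval x p ≠ 0 ∧ eval x q ≠ 0 := by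
  have hp₀ : p ≠ 0 := by rintro rfl; exact hp (map_zero _)
  have hq₀ : q ≠ 0 := by rintro rfl; exact hq (map_zero _)
  by_contra! h
  refine mul_ne_zero hp₀ hq₀ (MvPolynomial.funext fun x => ?_)
  rw [map_mul, map_zero, mul_eq_zero, or_iff_not_imp_left]
  exact h x

variable [Fintype ι]

theorem eval_sum_sum_C_mul_X_mul_X (A : Matrix ι ι R) (x : ι → R) :
    eval x (∑ i, ∑ j, C (A i j) * X i * X j) = x ⬝ᵥ A *ᵥ x := by
  simp only [map_sum, map_mul, eval_C, eval_X, dotProduct, mulVec, Finset.mul_sum]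
  exact Finset.sum_congr rfl fun i _ => Finset.sum_congr rfl fun j _ => by ring

theorem exists_dotProduct_mulVec_ne_zero_and_mulVec_ne_zero [IsDomain R] [Infinite R]
    {A B : Matrix ι ι R} {u : ι → R} (hA : u ⬝ᵥ A *ᵥ u ≠ 0) {i : ι} (hB : B i ≠ 0) :
    ∃ x, x ⬝ᵥ A *ᵥ x ≠ 0 ∧ (B *ᵥ x) i ≠ 0 := by
  classical
  obtain ⟨j, hj⟩ := Function.ne_iff.mp hB
  have hlinear (x : ι → R) : eval x (∑ j, C (B i j) * X j) = (B *ᵥ x) i := by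
    simp [mulVec, dotProduct]
  rw [← eval_sum_sum_C_mul_X_mul_X] at hA
  have hB' : (B *ᵥ Pi.single j 1) i ≠ 0 := by simpa using hj
  rw [← hlinear] at hB'
  simpa only [eval_sum_sum_C_mul_X_mul_X, hlinear] using
    exists_eval_ne_zero_and_eval_ne_zero hA hB'

namespace QuadPoly

theorem div_pow_le_density_pow_pencil {A₁ A₂ : Matrix ι ι ℤ} {x : ι → ℤ} {i : ι}
    {g D l : ℤ} {N : ℕ} (hi : ((A₂ + A₂ᵀ) *ᵥ x) i = 0)
    (hg : x ⬝ᵥ A₂ *ᵥ x * ((A₁ + A₁ᵀ) *ᵥ x) i = g) (hN₀ : N ≠ 0) (hN : (N : ℤ) = g ^ 2 * D)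
    (hgD : g ∣ D) (hl : (N : ℤ) ∣ l - 1) (z : ℤ) (L : ι → ℤ) (k : ℤ) (T : ℕ) :
    N / (N : ℝ) ^ Fintype.card ι ≤ density
      ⟨(x ⬝ᵥ A₂ *ᵥ x * l) • A₁ + (-(x ⬝ᵥ A₁ *ᵥ x) + N * z) • A₂, (N : ℤ) • L, N * k⟩
      (N ^ (T + 1)) := by
  obtain ⟨t, ht⟩ := hl
  obtain rfl : l = 1 + N * t := by linarith
  refine div_pow_le_density_pow (w := 1 + D * (g ^ 2 * t + g * L i)) hN₀ hN hgD
    (isCoprime_one_left.add_mul_left_left _) (x := x) (i := i) ?_ ?_ T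
  · refine ⟨x ⬝ᵥ A₂ *ᵥ x * x ⬝ᵥ A₁ *ᵥ x * t + z * x ⬝ᵥ A₂ *ᵥ x + L ⬝ᵥ x + k, ?_⟩
    simp only [QuadPoly.eval, add_mulVec, smul_mulVec, dotProduct_add, dotProduct_smul,
      smul_dotProduct, smul_eq_mul]
    ring
  · rw [grad, hessian_of_A_eq rfl, add_mulVec, smul_mulVec, smul_mulVec, Pi.add_apply, Pi.add_apply,
      Pi.smul_apply, Pi.smul_apply, hi, smul_zero, add_zero, smul_eq_mul, hN]
    change _ + g ^ 2 * D * L i = _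
    linear_combination (1 + g ^ 2 * D * t) * hg

end QuadPoly

variable {A₁ : Matrix ι ι ℤ} {i j : ι} {a b c : ℤ}

theorem exists_row_ne_zero_of_card_lt_rank {B : Matrix ι ι ℤ} {s : Finset ι}
    (h : s.card < (B.map ((↑) : ℤ → ℚ)).rank) :
    ∃ i ∉ s, B i ≠ 0 := by
  by_contra! hB
  refine h.not_ge (rank_le_card_of_row_eq_zero fun i hi => ?_)
  ext j
  simp [hB i hi]

theorem exists_div_pow_le_density_pow_pencil [DecidableEq ι]
    (h : 2 < ((A₁ + A₁ᵀ).map ((↑) : ℤ → ℚ)).rank)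
    (hij : i ≠ j) (hdisc : b ^ 2 - 4 * a * c ≠ 0) {W : ℕ} (hW : W ≠ 0) :
    ∃ N : ℕ, N ≠ 0 ∧ W ∣ N ∧ ∃ y₁ y₂ : ℤ, y₁ ≠ 0 ∧ y₁ ∣ N ∧
      ∀ l : ℤ, (N : ℤ) ∣ l - 1 → ∀ (z : ℤ) (L : ι → ℤ) (k : ℤ) (T : ℕ),
        N / (N : ℝ) ^ Fintype.card ι ≤ QuadPoly.density
          ⟨(y₁ * l) • A₁ + (y₂ + N * z) • binaryForm i j a b c, (N : ℤ) • L, N * k⟩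
          (N ^ (T + 1)) := by
  obtain ⟨r, hr, hr₀⟩ := exists_row_ne_zero_of_card_lt_rank (s := {i, j})
    (Finset.card_le_two.trans_lt h)
  obtain ⟨u, hu⟩ := exists_dotProduct_binaryForm_mulVec_ne_zero hij hdisc
  obtain ⟨x, hx, hxr⟩ := exists_dotProduct_mulVec_ne_zero_and_mulVec_ne_zero hu hr₀
  let A₂ := binaryForm i j a b c
  let g : ℤ := x ⬝ᵥ A₂ *ᵥ x * ((A₁ + A₁ᵀ) *ᵥ x) r
  have hg : g ≠ 0 := mul_ne_zero hx hxr
  have hrow : ((A₂ + A₂ᵀ) *ᵥ x) r = 0 := by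
    change (A₂ + A₂ᵀ) r ⬝ᵥ x = 0
    rw [binaryForm_add_transpose_row_eq_zero hr, zero_dotProduct]
  have hN₀ : g.natAbs ^ 3 * W ≠ 0 := mul_ne_zero (pow_ne_zero _ (Int.natAbs_ne_zero.mpr hg)) hW
  have hN : ((g.natAbs ^ 3 * W : ℕ) : ℤ) = g ^ 2 * (|g| * W) := by
    push_cast
    rw [← sq_abs g]
    ring
  have hdvd : x ⬝ᵥ A₂ *ᵥ x ∣ ((g.natAbs ^ 3 * W : ℕ) : ℤ) := by
    rw [hN, sq, mul_assoc, mul_assoc]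
    exact dvd_mul_right _ _
  exact ⟨_, hN₀, dvd_mul_left _ _, x ⬝ᵥ A₂ *ᵥ x, -(x ⬝ᵥ A₁ *ᵥ x), hx, hdvd,
    fun l hl => QuadPoly.div_pow_le_density_pow_pencil hrow rfl hN₀ hN
      (((dvd_abs g g).mpr dvd_rfl).mul_right _) hl⟩

end DensityAtModulus

section PencilAverage

theorem not_dvd_mul_prime_mul {x y : ℤ} {N l p : ℕ} (hl : l.Prime) (hx : x ∣ N) (hy : y ∣ N)
    (hp : p.Prime) (hpN : ¬p ∣ N) (hpl : p ≠ l) : ¬(p : ℤ) ∣ x * l * y := by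
  have hpN' : ¬(p : ℤ) ∣ N := by rwa [Int.natCast_dvd_natCast]
  have hpZ := Nat.prime_iff_prime_int.mp hp
  rw [hpZ.dvd_mul, hpZ.dvd_mul, Int.natCast_dvd_natCast, Nat.prime_dvd_prime_iff_eq hp hl]
  rintro ((h | h) | h)
  exacts [hpN' (h.trans hx), hpl h, hpN' (h.trans hy)]

theorem one_sub_inv_le_density_pow_pencil {ι : Type*} [Fintype ι] [DecidableEq ι] [Nonempty ι]
    {A₁ : Matrix ι ι ℤ} {i j : ι} {a b c d y₁ y₂ : ℤ} {N l p : ℕ} {F : QuadPoly ι ℤ} (hij : i ≠ j)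
    (hdisc : b ^ 2 - 4 * a * c ≠ 0) (hd : ScalarFactorsThrough (Fin 5) d (A₁ + A₁ᵀ))
    (hdiscN : 4 * (b ^ 2 - 4 * a * c).natAbs ∣ N) (hdN : d ∣ N) (hyN : y₁ ∣ N) (hl : l.Prime)
    (hlN : l ≡ 1 [MOD N]) (hy₂ : 0 < y₂) (hyl : y₂ < l) (hp : p.Prime) (hpN : ¬p ∣ N)
    (hF : F.A = (y₁ * l) • A₁ + y₂ • binaryForm i j a b c) (T : ℕ) :
    1 - 1 / (p : ℝ) ≤ F.density (p ^ (T + 1)) := by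
  have : Fact p.Prime := ⟨hp⟩
  refine le_trans ?_ (QuadPoly.nonsingularDensity_le_density_pow F p T)
  obtain rfl | hpl := eq_or_ne p l
  · have hmod : p % (4 * (b ^ 2 - 4 * a * c).natAbs) = 1 := by
      have := hlN.of_dvd hdiscN
      rwa [Nat.ModEq, Nat.mod_eq_of_lt (a := 1) (by lia)] at this
    exact QuadPoly.one_sub_le_nonsingularDensity_of_dvd hij hF (dvd_mul_left _ _)
      (fun h => hyl.not_ge (Int.le_of_dvd hy₂ h)) hdisc hmod
  · refine QuadPoly.one_sub_le_nonsingularDensity_of_not_dvd hF hd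
      (not_dvd_mul_prime_mul hl hyN hdN hp hpN hpl)

variable {m : ℕ} {A₁ : Matrix (Fin m) (Fin m) ℤ} {i j : Fin m} {a b c : ℤ}

theorem mul_le_sum_re_singSeries_pencil {d y₁ y₂ : ℤ} {M : Matrix (Fin 5) (Fin 5) ℤ}
    {N l L B : ℕ} {δ : ℝ} (hij : i ≠ j) (hdisc : b ^ 2 - 4 * a * c ≠ 0) (hd₀ : d ≠ 0)
    (hd : ScalarFactorsThrough (Fin 5) d (A₁ + A₁ᵀ))
    (hM : ∀ s t : ℤ, ScalarFactorsThrough (Fin 5) (pencilDet M (s * d) t)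
      (s • (A₁ + A₁ᵀ) + t • (binaryForm i j a b c + (binaryForm i j a b c)ᵀ)))
    (hN₀ : N ≠ 0) (hdiscN : 4 * (b ^ 2 - 4 * a * c).natAbs ∣ N) (hdN : d ∣ N)
    (htail : ∀ s : Finset ℕ, (∀ p ∈ s, p.Prime ∧ ¬p ∣ N) →
      ∑ p ∈ s, 5 / (p : ℝ) ^ (3 / 2 : ℝ) ≤ 1 / 8)
    (hy₁ : y₁ ≠ 0) (hyN : y₁ ∣ N) (hy₂ : y₂ ∈ Set.Ioc 0 (N : ℤ)) (hl : l.Prime)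
    (hlN : l ≡ 1 [MOD N]) (hl8 : 8 ≤ l) (hLl : N * (L + 1) < l)
    (hB : ∀ z < L, (pencilDet M (y₁ * l * d) (y₂ + N * z)).natAbs ≤ B)
    (hLB : 10 + 5 * Real.log B ≤ 3 / 8 * L) (q : ℕ → Fin m → ℤ) (k : ℕ → ℤ) (hδ : 0 ≤ δ)
    (hNδ : ∀ (z : ℕ) (T : ℕ), δ ≤ QuadPoly.density
      ⟨(y₁ * l) • A₁ + (y₂ + N * z) • binaryForm i j a b c, (N : ℤ) • q z, N * k z⟩
      (N ^ (T + 1))) :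
    δ / 4 * L ≤ ∑ z ∈ Finset.range L with pencilDet M (y₁ * l * d) (y₂ + N * (z : ℕ)) ≠ 0,
      (singSeries m ((N : ℤ) •
        (⟨(y₁ * l) • A₁ + (y₂ + N * (z : ℕ)) • binaryForm i j a b c,
          (N : ℤ) • q z, N * k z⟩ : QuadPoly (Fin m) ℤ)).eval).re := by
  have : Nonempty (Fin m) := ⟨i⟩
  refine QuadPoly.mul_le_sum_re_singSeries hN₀ hl8 ?_
    (fun p hp hpN => not_dvd_mul_prime_mul hl hyN hdN hp hpN) htail hB hLB
    (fun z => ?_) hδ hNδ fun z hz p hp hpN T => ?_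
  · exact mul_ne_zero (mul_ne_zero hy₁ (by exact_mod_cast hl.ne_zero)) hd₀
  · rw [QuadPoly.hessian_of_A_eq rfl]
    exact hM _ _
  · refine one_sub_inv_le_density_pow_pencil hij hdisc hd hdiscN hdN hyN hl hlN ?_ ?_ hp hpN rfl T
    · have := hy₂.1
      positivity
    · have : N * (z + 1) ≤ N * L := Nat.mul_le_mul_left N hz
      have := hy₂.2
      nlinarith

theorem exists_natAbs_pencilDet_mul_le {κ : Type*} [Fintype κ] [DecidableEq κ]
    (M : Matrix κ κ ℤ) (x y : ℤ) (A : ℕ) :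
    ∃ D ≠ 0, ∀ (t : ℤ) (l u : ℕ), l ≤ A * u → t.natAbs ≤ u →
      (pencilDet M (x * l * y) t).natAbs ≤ D * u ^ Fintype.card κ := by
  obtain ⟨C, hC₀, hC⟩ := exists_natAbs_pencilDet_le M
  refine ⟨C * ((x * y).natAbs * A + 1) ^ Fintype.card κ, by positivity, fun t l u hl ht => ?_⟩
  rw [mul_assoc C, ← mul_pow, add_one_mul, mul_assoc _ A]
  refine hC _ _ _ ?_ (le_add_left ht)
  rw [mul_right_comm, Int.natAbs_mul, Int.natAbs_natCast]
  exact le_add_right (Nat.mul_le_mul_left _ hl)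

theorem exists_mul_le_sum_re_singSeries_pencil (h : 5 ≤ ((A₁ + A₁ᵀ).map ((↑) : ℤ → ℚ)).rank)
    (hij : i ≠ j) (hdisc : b ^ 2 - 4 * a * c ≠ 0) :
    ∃ N : ℕ, N ≠ 0 ∧ ∃ y₁ y₂ : ℤ, y₁ ≠ 0 ∧ y₂ ∈ Set.Ioc 0 (N : ℤ) ∧ ∃ δ > (0 : ℝ), ∀ A : ℕ,
      ∀ᶠ L : ℕ in Filter.atTop, ∀ l : ℕ, l.Prime → l ≡ 1 [MOD N] → N * (L + 1) < l →
        l ≤ A * (N * (L + 1)) → ∃ Z ⊆ Finset.range L, ∀ (q : ℕ → Fin m → ℤ) (k : ℕ → ℤ),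
          δ * L ≤ ∑ z ∈ Z, (singSeries m ((N : ℤ) •
            (⟨(y₁ * l) • A₁ + (y₂ + N * (z : ℕ)) • binaryForm i j a b c,
              (N : ℤ) • q z, N * k z⟩ : QuadPoly (Fin m) ℤ)).eval).re := by
  obtain ⟨d, hd₀, hd⟩ := exists_scalarFactorsThrough_of_card_le_rank (κ := Fin 5) h
  obtain ⟨M, hM⟩ := hd.exists_pencilDet (binaryForm i j a b c + (binaryForm i j a b c)ᵀ)
  obtain ⟨P, hP₀, hP⟩ := exists_forall_sum_primes_not_dvd_le (ε := 1 / 8)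
    ((Real.summable_one_div_nat_rpow (p := 3 / 2)).mpr (by norm_num) |>.mul_left 5) (by norm_num)
  obtain ⟨N, hN₀, hWN, y₁, y₀, hy₁, hyN, hdensity⟩ := exists_div_pow_le_density_pow_pencil
    (W := 4 * (b ^ 2 - 4 * a * c).natAbs * (d.natAbs * P)) (h.trans_lt' (by norm_num)) hij hdisc
    (by simp [hdisc, hd₀, hP₀])
  have hdPN := (dvd_mul_left _ _).trans hWN
  obtain ⟨w, hw⟩ := (existsUnique_add_zsmul_mem_Ioc (by lia : (0 : ℤ) < N) y₀ 0).exists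
  rw [zero_add] at hw
  refine ⟨N, hN₀, y₁, y₀ + w • (N : ℤ), hy₁, hw, N / (N : ℝ) ^ m / 4, by positivity, fun A => ?_⟩
  obtain ⟨D, hD₀, hD⟩ := exists_natAbs_pencilDet_mul_le M y₁ d A
  filter_upwards [eventually_add_mul_log_le 10 5 (D := D * N ^ 5) (by positivity) 5
    (by norm_num : (0 : ℝ) < 3 / 8),
    Filter.eventually_ge_atTop 8] with L hL hL8 l hl hlN hLl hlA
  refine ⟨_, Finset.filter_subset _ _, fun q k => mul_le_sum_re_singSeries_pencil
    (B := D * (N * (L + 1)) ^ 5) hij hdisc hd₀ hd hM hN₀ ((dvd_mul_right _ _).trans hWN)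
    (Int.natAbs_dvd.mp (Int.natCast_dvd_natCast.mpr ((dvd_mul_right _ _).trans hdPN)))
    (fun s hs => ?_) hy₁ hyN hw hl hlN ?_ hLl (fun z hz => ?_) ?_ q k (by positivity) fun z T => ?_⟩
  · simpa only [mul_one_div] using hP N ((dvd_mul_left _ _).trans hdPN) s hs
  · nlinarith [Nat.pos_of_ne_zero hN₀]
  · refine hD _ l _ hlA ?_
    have := hw.1
    have := hw.2
    have : N * (z + 1) ≤ N * (L + 1) := Nat.mul_le_mul_left N (by lia)
    lia
  · rw [mul_pow, ← mul_assoc]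
    exact_mod_cast hL
  · have := hdensity l (by exact_mod_cast Nat.modEq_iff_dvd.mp hlN.symm) (w + z) (q z) (k z) T
    rwa [Fintype.card_fin, show y₀ + N * (w + z) = y₀ + w • (N : ℤ) + N * z by
      rw [smul_eq_mul]; ring] at this

end PencilAverage

section PencilCubic

theorem eval_smul_of_isHomogeneous {σ R : Type*} [CommSemiring R] {p : MvPolynomial σ R} {n : ℕ}
    (hp : p.IsHomogeneous n) (c : R) (x : σ → R) : eval (c • x) p = c ^ n * eval x p := by
  rw [eval_eq, eval_eq, Finset.mul_sum]
  refine Finset.sum_congr rfl fun d hd => ?_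
  rw [← hp (mem_support_iff.mp hd), Finsupp.weight_apply, Finsupp.sum]
  simp only [Pi.smul_apply, smul_eq_mul, mul_pow, Finset.prod_mul_distrib, mul_one, Pi.one_apply,
    Finset.prod_pow_eq_pow_sum]
  ring

variable {ι κ R : Type*} [Fintype ι] [CommRing R]

/-- The cubic form `y_s F₁(x) + y_t (a x_i² + b x_i x_j + c x_j²) + ∑ x_u q_u(y) + T(y)`, where
`F₁(x) = xᵀ A₁ x`: the fibres over `y` have quadratic part in the pencil spanned by `F₁` and the
binary form. -/
noncomputable def pencilCubic (A₁ : Matrix ι ι R) (i j : ι) (a b c : R) (s t : κ)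
    (q : ι → MvPolynomial κ R) (T : MvPolynomial κ R) : MvPolynomial (ι ⊕ κ) R :=
  X (Sum.inr s) * rename Sum.inl (∑ i, ∑ j, C (A₁ i j) * X i * X j)
    + C a * X (Sum.inr t) * X (Sum.inl i) ^ 2
    + C b * X (Sum.inr t) * X (Sum.inl i) * X (Sum.inl j)
    + C c * X (Sum.inr t) * X (Sum.inl j) ^ 2
    + ∑ i, X (Sum.inl i) * rename Sum.inr (q i) + rename Sum.inr T

theorem eval_pencilCubic_smul [DecidableEq ι] {q : ι → MvPolynomial κ R}
    (hq : ∀ j, (q j).IsHomogeneous 2) {T : MvPolynomial κ R} (hT : T.IsHomogeneous 3)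
    (A₁ : Matrix ι ι R) (i j : ι) (a b c : R) (s t : κ) (e : R) (y : κ → R) :
    (fun x => eval (Sum.elim x (e • y)) (pencilCubic A₁ i j a b c s t q T)) =
      (e • (⟨y s • A₁ + y t • binaryForm i j a b c, e • fun i => eval y (q i),
        e * (e * eval y T)⟩ : QuadPoly ι R)).eval := by
  funext x
  rw [pencilCubic, QuadPoly.eval_smul, QuadPoly.eval]
  have hlinear : ∑ i, x i * (e ^ 2 * eval y (q i)) = e ^ 2 * (fun i => eval y (q i)) ⬝ᵥ x := by
    rw [dotProduct, Finset.mul_sum]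
    exact Finset.sum_congr rfl fun i _ => by ring
  simp only [map_add, map_mul, map_pow, eval_X, eval_C, eval_rename, Sum.elim_comp_inl,
    Sum.elim_comp_inr, Sum.elim_inl, Sum.elim_inr, eval_sum_sum_C_mul_X_mul_X,
    eval_smul_of_isHomogeneous hT]
  simp only [map_sum, map_mul, eval_X, eval_rename, Sum.elim_comp_inr, Sum.elim_inl,
    eval_smul_of_isHomogeneous (hq _), hlinear, add_mulVec, smul_mulVec, dotProduct_add,
    dotProduct_smul, smul_dotProduct, dotProduct_binaryForm_mulVec, Pi.smul_apply, smul_eq_mul]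
  ring

end PencilCubic

section PencilPoint

/-- The point `N • (y₁ l, y₂ + N z, w₁, …, w_k)`: scaling by `N` makes every coefficient of the
fibre above it divisible by `N`, up to which the fibre lies on the pencil through `y₁` and `y₂`. -/
def pencilPoint (N : ℕ) (y₁ y₂ : ℤ) {k : ℕ} (l z : ℕ) (w : Fin k → ℕ) : Fin (k + 2) → ℤ :=
  (N : ℤ) • vecCons (y₁ * l) (vecCons (y₂ + N * z) fun i => (w i : ℤ))

variable {N : ℕ} {y₁ y₂ : ℤ} {k : ℕ}

theorem pencilPoint_injective (hN : N ≠ 0) (hy₁ : y₁ ≠ 0) :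
    Function.Injective fun v : (Σ _ : ℕ, ℕ) × (Fin k → ℕ) =>
      pencilPoint N y₁ y₂ v.1.1 v.1.2 v.2 := by
  rintro ⟨⟨l, z⟩, w⟩ ⟨⟨l', z'⟩, w'⟩ h
  have h := smul_right_injective _ (Nat.cast_ne_zero.mpr hN) h
  rw [vecCons_inj, vecCons_inj] at h
  obtain ⟨hl, hz, hw⟩ := h
  obtain rfl : l = l' := by simpa [hy₁] using hl
  obtain rfl : z = z' := by simpa [hN] using hz
  obtain rfl : w = w' := funext fun i => by exact_mod_cast congrFun hw i
  rfl

theorem abs_pencilPoint_le {A L l z : ℕ} {w : Fin k → ℕ} (hy₂ : y₂ ∈ Set.Ioc 0 (N : ℤ))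
    (hl : l ≤ A * (N * (L + 1))) (hz : z < L) (hw : ∀ i, w i < L) (i : Fin (k + 2)) :
    |pencilPoint N y₁ y₂ l z w i| ≤ N * ((|y₁| * A + 1) * (N * (L + 1))) := by
  rw [pencilPoint, Pi.smul_apply, smul_eq_mul, abs_mul, Nat.abs_cast]
  gcongr
  have hN : (0 : ℤ) < N := hy₂.1.trans_le hy₂.2
  have hu : (N * (L + 1) : ℤ) ≤ (|y₁| * A + 1) * (N * (L + 1)) :=
    le_mul_of_one_le_left (by positivity) (le_add_of_nonneg_left (by positivity))
  refine Fin.cases ?_ (Fin.cases (le_trans ?_ hu) fun i => le_trans ?_ hu) i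
  · have hl' : (l : ℤ) ≤ A * (N * (L + 1)) := by exact_mod_cast hl
    rw [cons_val_zero, abs_mul, Nat.abs_cast]
    nlinarith [mul_le_mul_of_nonneg_left hl' (abs_nonneg y₁)]
  · have := hy₂.1
    have := hy₂.2
    rw [cons_val_succ, cons_val_zero, abs_of_pos (by positivity)]
    nlinarith
  · have := hw i
    rw [cons_val_succ, cons_val_succ, Nat.abs_cast]
    nlinarith

theorem exists_le_sum_of_forall_pencilPoint {f : (Fin (k + 2) → ℤ) → ℝ} {A L : ℕ}
    {P : Finset ℕ} {δ : ℝ} (hN : N ≠ 0) (hy₁ : y₁ ≠ 0) (hy₂ : y₂ ∈ Set.Ioc 0 (N : ℤ))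
    (hP : ∀ l ∈ P, l ≤ A * (N * (L + 1)))
    (hf : ∀ l ∈ P, ∃ Z ⊆ Finset.range L, ∀ w : Fin k → ℕ,
      δ ≤ ∑ z ∈ Z, f (pencilPoint N y₁ y₂ l z w)) :
    ∃ S : Finset (Fin (k + 2) → ℤ),
      (∀ y ∈ S, ∀ i, |y i| ≤ N * ((|y₁| * A + 1) * (N * (L + 1)))) ∧
        P.card * L ^ k * δ ≤ ∑ y ∈ S, f y := by
  choose! Z hZL hZ using hf
  let box : Finset (Fin k → ℕ) := Fintype.piFinset fun _ => Finset.range L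
  refine ⟨((P.sigma Z) ×ˢ box).image fun v => pencilPoint N y₁ y₂ v.1.1 v.1.2 v.2, ?_, ?_⟩
  · simp only [Finset.forall_mem_image, Finset.mem_product, Finset.mem_sigma, box,
      Fintype.mem_piFinset, Finset.mem_range]
    rintro ⟨⟨l, z⟩, w⟩ ⟨⟨hl, hz⟩, hw⟩
    exact abs_pencilPoint_le hy₂ (hP l hl) (Finset.mem_range.mp (hZL l hl hz)) hw
  · rw [Finset.sum_image (pencilPoint_injective hN hy₁).injOn, Finset.sum_product_right]
    calc P.card * L ^ k * δ = ∑ _w ∈ box, ∑ _l ∈ P, δ := by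
          simp only [Finset.sum_const, box, Fintype.card_piFinset_const, Finset.card_range,
            nsmul_eq_mul]
          push_cast
          ring
      _ ≤ _ := by
          simp only [Finset.sum_sigma]
          exact Finset.sum_le_sum fun _ _ => Finset.sum_le_sum fun _ hl => hZ _ hl _

end PencilPoint

theorem eventually_pow_div_log_le {A N : ℕ} (hA : 1 < A) (hN : N ≠ 0) (k : ℕ) :
    ∀ᶠ Y : ℝ in Filter.atTop, Y ^ (k + 1) / Real.log Y ≤
      2 ^ (k + 1) * ((N * (⌊Y⌋₊ + 1) : ℕ) / Real.log (A * (N * (⌊Y⌋₊ + 1) : ℕ)) * ⌊Y⌋₊ ^ k) := by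
  filter_upwards [Filter.eventually_ge_atTop (2 * A * N : ℝ)] with Y hY
  have hAN : (2 : ℝ) ≤ A * N := by exact_mod_cast Nat.mul_le_mul hA (Nat.one_le_iff_ne_zero.mpr hN)
  have hN₁ : (1 : ℝ) ≤ N := by exact_mod_cast Nat.one_le_iff_ne_zero.mpr hN
  have hY₁ : 1 < Y := by linarith
  have hL₁ : Y - 1 < ⌊Y⌋₊ := Nat.sub_one_lt_floor Y
  have hL₂ : ⌊Y⌋₊ ≤ Y := Nat.floor_le (by linarith)
  have hu : Y ≤ (N * (⌊Y⌋₊ + 1) : ℕ) := by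
    push_cast
    nlinarith
  have hlog₀ : 0 < Real.log (A * (N * (⌊Y⌋₊ + 1) : ℕ)) :=
    Real.log_pos (one_lt_mul (by exact_mod_cast hA.le) (hY₁.trans_le hu))
  have hlog : Real.log (A * (N * (⌊Y⌋₊ + 1) : ℕ)) ≤ 2 * Real.log Y := by
    rw [two_mul, ← Real.log_mul (by positivity) (by positivity)]
    refine Real.log_le_log (by positivity) ?_
    push_cast
    nlinarith
  calc Y ^ (k + 1) / Real.log Y = 2 ^ (k + 1) * (Y / (2 * Real.log Y) * (Y / 2) ^ k) := by
        rw [div_pow]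
        field_simp
        ring
    _ ≤ _ := by
        gcongr
        linarith

theorem exists_eventually_pow_div_log_le_card_primes {N : ℕ} (hN : N ≠ 0) (k : ℕ) :
    ∃ A : ℕ, ∀ᶠ Y : ℝ in Filter.atTop, Y ^ (k + 1) / Real.log Y ≤ 2 ^ (k + 1) *
      (((Finset.Ioc (N * (⌊Y⌋₊ + 1)) (A * (N * (⌊Y⌋₊ + 1)))).filter fun l =>
        l.Prime ∧ l ≡ 1 [MOD N]).card * ⌊Y⌋₊ ^ k) := by
  have : NeZero N := ⟨hN⟩
  obtain ⟨A, hA, hprimes⟩ := exists_div_log_le_card_primes_Ioc (isUnit_one (M := ZMod N))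
  simp only [← ZMod.natCast_eq_natCast_iff, Nat.cast_one]
  refine ⟨A, (eventually_pow_div_log_le hA hN k).mono fun Y hY => hY.trans ?_⟩
  gcongr
  exact hprimes _ (Nat.pos_of_ne_zero (by positivity))

section CubicAverage

variable {k m : ℕ} {A₁ : Matrix (Fin m) (Fin m) ℤ} {i j : Fin m} {a b c : ℤ}
  {q : Fin m → MvPolynomial (Fin (k + 2)) ℤ} {R : MvPolynomial (Fin (k + 2)) ℤ}

theorem exists_mul_card_primes_le_sum_re_singSeries
    (hrank : 5 ≤ ((A₁ + A₁ᵀ).map ((↑) : ℤ → ℚ)).rank) (hij : i ≠ j)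
    (hdisc : b ^ 2 - 4 * a * c ≠ 0) (hq : ∀ j, (q j).IsHomogeneous 2) (hR : R.IsHomogeneous 3) :
    ∃ N : ℕ, N ≠ 0 ∧ ∃ δ > (0 : ℝ), ∀ A : ℕ, ∃ K > (0 : ℝ), ∀ᶠ L : ℕ in Filter.atTop,
      ∃ 𝒞 : Finset (Fin (k + 2) → ℤ), (∀ y ∈ 𝒞, ∀ i, (|y i| : ℝ) ≤ K * (L + 1)) ∧
        δ * (((Finset.Ioc (N * (L + 1)) (A * (N * (L + 1)))).filter fun l =>
          l.Prime ∧ l ≡ 1 [MOD N]).card * L ^ (k + 1)) ≤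
            ∑ y ∈ 𝒞, (singSeries m fun x =>
              eval (Sum.elim x y) (pencilCubic A₁ i j a b c 0 1 q R)).re := by
  obtain ⟨N, hN, y₁, y₂, hy₁, hy₂, δ, hδ, hpencil⟩ :=
    exists_mul_le_sum_re_singSeries_pencil hrank hij hdisc
  refine ⟨N, hN, δ, hδ, fun A => ⟨N * ((|y₁| * A + 1) * N), by positivity,
    (hpencil A).mono fun L hL => ?_⟩⟩
  let P := (Finset.Ioc (N * (L + 1)) (A * (N * (L + 1)))).filter fun l => l.Prime ∧ l ≡ 1 [MOD N]
  let f (y : Fin (k + 2) → ℤ) : ℝ :=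
    (singSeries m fun x => eval (Sum.elim x y) (pencilCubic A₁ i j a b c 0 1 q R)).re
  have hf (l : ℕ) (hl : l ∈ P) : ∃ Z ⊆ Finset.range L, ∀ w : Fin k → ℕ,
      δ * L ≤ ∑ z ∈ Z, f (pencilPoint N y₁ y₂ l z w) := by
    rw [Finset.mem_filter, Finset.mem_Ioc] at hl
    obtain ⟨⟨hLl, hlA⟩, hl, hlN⟩ := hl
    obtain ⟨Z, hZ, hsum⟩ := hL l hl hlN hLl hlA
    refine ⟨Z, hZ, fun w => ?_⟩
    simp only [f, pencilPoint, eval_pencilCubic_smul hq hR]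
    exact hsum _ _
  obtain ⟨𝒞, hbound, hsum⟩ := exists_le_sum_of_forall_pencilPoint hN hy₁ hy₂
    (fun l hl => (Finset.mem_Ioc.mp (Finset.mem_of_mem_filter l hl)).2) hf
  refine ⟨𝒞, fun y hy i => ?_, le_of_eq_of_le (by ring) hsum⟩
  rw [mul_assoc, mul_assoc]
  exact_mod_cast hbound y hy i

theorem stmt13_general (hrank : 5 ≤ ((A₁ + A₁ᵀ).map ((↑) : ℤ → ℚ)).rank) (hij : i ≠ j)
    (hdisc : b ^ 2 - 4 * a * c ≠ 0) (hq : ∀ j, (q j).IsHomogeneous 2) (hR : R.IsHomogeneous 3) :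
    ∃ c₀ > (0 : ℝ), ∃ K > (0 : ℝ), ∃ Y₀ : ℝ, ∀ Y : ℝ, Y₀ ≤ Y →
      ∃ 𝒞 : Finset (Fin (k + 2) → ℤ),
        (∀ y ∈ 𝒞, ∀ i, (|y i| : ℝ) ≤ K * Y) ∧
        c₀ * Y ^ (k + 2) / Real.log Y ≤
          ∑ y ∈ 𝒞, (singSeries m fun x =>
            eval (Sum.elim x y) (pencilCubic A₁ i j a b c 0 1 q R)).re := by
  obtain ⟨N, hN, δ, hδ, haverage⟩ :=
    exists_mul_card_primes_le_sum_re_singSeries hrank hij hdisc hq hR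
  obtain ⟨A, hprimes⟩ := exists_eventually_pow_div_log_le_card_primes hN (k + 1)
  obtain ⟨K, hK, hL⟩ := haverage A
  obtain ⟨Y₀, hY₀⟩ := Filter.eventually_atTop.mp <| hprimes.and <|
    (Filter.eventually_ge_atTop 1).and <| tendsto_nat_floor_atTop.eventually hL
  refine ⟨δ / 2 ^ (k + 2), by positivity, K * 2, by positivity, Y₀, fun Y hY => ?_⟩
  obtain ⟨hcard, hY₁, 𝒞, hbound, hsum⟩ := hY₀ Y hY
  have hfloor : (⌊Y⌋₊ + 1 : ℝ) ≤ 2 * Y := by linarith [Nat.floor_le (zero_le_one.trans hY₁)]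
  refine ⟨𝒞, fun y hy i => (hbound y hy i).trans ?_, le_trans ?_ hsum⟩
  · rw [mul_assoc]
    gcongr
  · rw [mul_div_assoc, div_mul_comm, mul_comm]
    gcongr
    exact div_le_of_le_mul₀ (by positivity) (by positivity) (by rwa [mul_comm])

end CubicAverage

/-- For `C(x,y) = y₁F₁(x) + a y₂ x₁² + b y₂ x₁x₂ + c y₂ x₂² + Σ x_i q_i(y)
+ R(y)` with `b² − 4ac ≠ 0`, `F₁` nonsingular indefinite of rank `r ≥ 5`, `C` irreducible
with nonsingular `p`-adic zeros for all `p`, one has `Σ_{y ∈ 𝒞_h(Y)} 𝔖(F_y) ≫ Y^h/log Y`. -/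
theorem stmt13 (n h m : ℕ) (hh : 1 < h) (hhn : h < n) (hm : m = n - h) (hm2 : 1 < m)
    (a b c : ℤ) (hdisc : b ^ 2 - 4 * a * c ≠ 0)
    (A₁ : Matrix (Fin m) (Fin m) ℤ) (r : ℕ) (hr5 : 5 ≤ r)
    (hrank : Matrix.rank ((A₁ + A₁ᵀ).map ((↑) : ℤ → ℚ)) = r)
    (hindef : (∃ u : Fin m → ℝ, 0 < u ⬝ᵥ (A₁.map ((↑) : ℤ → ℝ)).mulVec u) ∧
      (∃ u : Fin m → ℝ, u ⬝ᵥ (A₁.map ((↑) : ℤ → ℝ)).mulVec u < 0))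
    (q : Fin m → MvPolynomial (Fin h) ℤ) (hq : ∀ j, (q j).IsHomogeneous 2)
    (R : MvPolynomial (Fin h) ℤ) (hR : R.IsHomogeneous 3)
    (Cpoly : MvPolynomial (Fin m ⊕ Fin h) ℤ)
    (hC : Cpoly = X (Sum.inr ⟨0, Nat.lt_trans Nat.zero_lt_one hh⟩) *
        rename Sum.inl (∑ i, ∑ j, C (A₁ i j) * X i * X j)
      + C a * X (Sum.inr ⟨1, hh⟩) * X (Sum.inl ⟨0, Nat.lt_trans Nat.zero_lt_one hm2⟩) ^ 2
      + C b * X (Sum.inr ⟨1, hh⟩) * X (Sum.inl ⟨0, Nat.lt_trans Nat.zero_lt_one hm2⟩) *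
          X (Sum.inl ⟨1, hm2⟩)
      + C c * X (Sum.inr ⟨1, hh⟩) * X (Sum.inl ⟨1, hm2⟩) ^ 2
      + ∑ i, X (Sum.inl i) * rename Sum.inr (q i) + rename Sum.inr R)
    (hirr : Irreducible (MvPolynomial.map (Int.castRingHom ℚ) Cpoly))
    (hpadic : ∀ (p : ℕ) [Fact p.Prime], ∃ z : (Fin m ⊕ Fin h) → ℚ_[p],
      eval z (MvPolynomial.map (Int.castRingHom ℚ_[p]) Cpoly) = 0 ∧
      ∃ u, eval z (pderiv u (MvPolynomial.map (Int.castRingHom ℚ_[p]) Cpoly)) ≠ 0) :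
    ∃ c₀ > (0 : ℝ), ∃ K > (0 : ℝ), ∃ Y₀ : ℝ, ∀ Y : ℝ, Y₀ ≤ Y →
      ∃ 𝒞 : Finset (Fin h → ℤ),
        (∀ y ∈ 𝒞, ∀ i, (|y i| : ℝ) ≤ K * Y) ∧
        c₀ * Y ^ h / Real.log Y ≤
          ∑ y ∈ 𝒞, (singSeries m fun x => eval (Sum.elim x y) Cpoly).re := by
  obtain ⟨k, rfl⟩ := Nat.exists_eq_add_of_le' hh
  exact hC ▸ stmt13_general (hrank ▸ hr5) (by simp) hdisc hq hR
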